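/- Let δ > 0 and let u ∈ C²(S² ∩ B_δ(S) \ {S}) be a (−1)-homogeneous axisymmetric solution of the stationary Navier–Stokes equations, and let τ := lim_{x∈S², x→S} |x'| u_θ(x) (which exists and is finite). If 2 < τ < 3, then either |x'| u_φ is constant on S² near S, or the limit lim_{x∈S², x→S} |x'|^{τ−1} u_φ(x) exists, is finite, and is nonzero. Moreover, lim_{x∈S², x→S} |x'|^{2τ−4} u_r(x) exists and is finite. -/

import Mathlib

noncomputable section

open Real Filter MeasureTheory Metric Topology
open scoped ENNReal InnerProductSpace

abbrev V3 := EuclideanSpace ℝ (Fin 3)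
abbrev V2 := EuclideanSpace ℝ (Fin 2)

/-- standard basis vector in `ℝ³` -/
def e3 (j : Fin 3) : V3 := EuclideanSpace.single j 1

/-- partial derivative `∂_j f` -/
def pd (j : Fin 3) (f : V3 → ℝ) (x : V3) : ℝ := fderiv ℝ f x (e3 j)

/-- Laplacian on `ℝ³` -/
def lap3 (f : V3 → ℝ) (x : V3) : ℝ := ∑ j, pd j (fun y => pd j f y) x

/-- stationary Navier–Stokes equations `-Δu + (u·∇)u + ∇p = 0`, `div u = 0` at `x` -/
def NSEq (u : V3 → V3) (p : V3 → ℝ) (x : V3) : Prop :=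
  (∀ i, - lap3 (fun z => u z i) x + (∑ j, u x j * pd j (fun z => u z i) x) + pd i p x = 0)
  ∧ (∑ j, pd j (fun z => u z j) x) = 0

/-- stationary Euler equations `(u·∇)u + ∇p = 0`, `div u = 0` at `x` -/
def EulerEq (u : V3 → V3) (p : V3 → ℝ) (x : V3) : Prop :=
  (∀ i, (∑ j, u x j * pd j (fun z => u z i) x) + pd i p x = 0)
  ∧ (∑ j, pd j (fun z => u z j) x) = 0

/-- south pole -/
def S3 : V3 := EuclideanSpace.single 2 (-1)
/-- north pole -/
def N3 : V3 := EuclideanSpace.single 2 1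

/-- the unit sphere `S²` -/
def sphere2 : Set V3 := Metric.sphere (0 : V3) 1

/-- the open cone over a subset of the unit sphere -/
def cone3 (Ω : Set V3) : Set V3 := {x : V3 | x ≠ 0 ∧ (‖x‖⁻¹ • x) ∈ Ω}

/-- `|x'| = √(x₁² + x₂²)` -/
def rho (x : V3) : ℝ := Real.sqrt ((x 0) ^ 2 + (x 1) ^ 2)

/-- the `x₃`-axis `{x' = 0}` -/
def axis3 : Set V3 := {x : V3 | x 0 = 0 ∧ x 1 = 0}

/-- `Ω_{a,b,R} = {a < x₃ < b, |x'| < R}` -/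
def OmegaR (a b R : ℝ) : Set V3 := {x : V3 | a < x 2 ∧ x 2 < b ∧ rho x < R}

/-- build a point of `ℝ³` from `x' ∈ ℝ²` and `x₃ ∈ ℝ` -/
def emb (y : V2) (t : ℝ) : V3 := (EuclideanSpace.equiv (Fin 3) ℝ).symm ![y 0, y 1, t]

/-- spherical component `u_r = u · e_r` -/
def uRc (u : V3 → V3) (x : V3) : ℝ := (u x 0 * x 0 + u x 1 * x 1 + u x 2 * x 2) / ‖x‖

/-- spherical component `u_θ = u · e_θ` -/
def uTc (u : V3 → V3) (x : V3) : ℝ :=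
  (u x 0 * x 0 * x 2 + u x 1 * x 1 * x 2) / (‖x‖ * rho x) - u x 2 * rho x / ‖x‖

/-- spherical component `u_φ = u · e_φ` -/
def uPc (u : V3 → V3) (x : V3) : ℝ := (-(u x 0) * x 1 + u x 1 * x 0) / rho x

/-- axisymmetry on a set: the spherical components are independent of the meridian angle -/
def AxisymOn (u : V3 → V3) (Ω : Set V3) : Prop :=
  ∀ x ∈ Ω, ∀ y ∈ Ω, ‖x‖ = ‖y‖ → x 2 = y 2 →
    uRc u x = uRc u y ∧ uTc u x = uTc u y ∧ uPc u x = uPc u y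

/-- spherical frame vector `e_r` -/
def eRv (x : V3) : V3 := ‖x‖⁻¹ • x

/-- spherical frame vector `e_θ` -/
def eThv (x : V3) : V3 := (EuclideanSpace.equiv (Fin 3) ℝ).symm
  ![x 2 * x 0 / (‖x‖ * rho x), x 2 * x 1 / (‖x‖ * rho x), -(rho x) / ‖x‖]

/-- spherical frame vector `e_φ` -/
def ePhv (x : V3) : V3 := (EuclideanSpace.equiv (Fin 3) ℝ).symm ![-(x 1) / rho x, x 0 / rho x, 0]

/-- the spherical cap `S² ∩ B_δ(S) \ {S}` -/
def NSCap (δ : ℝ) : Set V3 := (sphere2 ∩ Metric.ball S3 δ) \ {S3}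

/-- the spherical cap `S² ∩ B_δ(S)` -/
def NSCapFull (δ : ℝ) : Set V3 := sphere2 ∩ Metric.ball S3 δ


open Set in
lemma ax_mono {h h' : ℝ → ℝ} {c : ℝ} (hd : ∀ s ∈ Ioo (0:ℝ) c, HasDerivAt h (h' s) s)
    (hn : ∀ s ∈ Ioo (0:ℝ) c, 0 ≤ h' s) : MonotoneOn h (Ioo 0 c) := by
  apply monotoneOn_of_deriv_nonneg (convex_Ioo 0 c)
  · exact fun s hs => (hd s hs).continuousAt.continuousWithinAt
  · rw [interior_Ioo]; exact fun s hs => (hd s hs).differentiableAt.differentiableWithinAt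
  · rw [interior_Ioo]; intro s hs; rw [(hd s hs).deriv]; exact hn s hs

open Set in
lemma ax_ev {P : ℝ → Prop} (h : ∀ᶠ s in 𝓝[>] (0:ℝ), P s) : ∃ c > 0, ∀ s ∈ Ioo (0:ℝ) c, P s := by
  obtain ⟨c, hc, h⟩ := mem_nhdsGT_iff_exists_Ioo_subset.1 h
  exact ⟨c, hc, h⟩

lemma ax_pos : ∀ᶠ s in 𝓝[>] (0:ℝ), 0 < s := self_mem_nhdsWithin

lemma ax_rpow_zero {b : ℝ} (hb : 0 < b) : Tendsto (fun s : ℝ => s ^ b) (𝓝[>] 0) (𝓝 0) := by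
  have h := (Real.continuousAt_rpow_const 0 b (Or.inr hb.le)).tendsto
  rw [Real.zero_rpow hb.ne'] at h
  exact h.mono_left nhdsWithin_le_nhds

lemma ax_id : Tendsto (fun s : ℝ => s) (𝓝[>] 0) (𝓝 0) := tendsto_id.mono_left nhdsWithin_le_nhds

lemma ax_drpow (b : ℝ) : ∀ᶠ s in 𝓝[>] (0:ℝ), HasDerivAt (fun s : ℝ => s ^ b) (b * s ^ (b - 1)) s := by
  filter_upwards [ax_pos] with s hs
  exact Real.hasDerivAt_rpow_const (Or.inl hs.ne')

/-- bound on increments -/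
lemma ax_incr {h h' : ℝ → ℝ} {c b K : ℝ} (hb : b ≠ 1)
    (hd : ∀ s ∈ Set.Ioo (0:ℝ) c, HasDerivAt h (h' s) s)
    (hn : ∀ s ∈ Set.Ioo (0:ℝ) c, |h' s| ≤ K * s ^ (-b)) :
    MonotoneOn (fun s => h s + K / (1 - b) * s ^ (1 - b)) (Set.Ioo 0 c) ∧
    MonotoneOn (fun s => - h s + K / (1 - b) * s ^ (1 - b)) (Set.Ioo 0 c) := by
  have h1 : (1:ℝ) - b ≠ 0 := sub_ne_zero.2 hb.symm
  have key : ∀ s ∈ Set.Ioo (0:ℝ) c,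
      HasDerivAt (fun s : ℝ => K / (1 - b) * s ^ (1 - b)) (K * s ^ (-b)) s := by
    intro s hs
    have := (Real.hasDerivAt_rpow_const (p := 1 - b) (Or.inl hs.1.ne')).const_mul (K / (1 - b))
    refine HasDerivAt.congr_deriv this ?_
    rw [show (1 - b - 1) = -b by ring]; field_simp
  constructor
  · apply ax_mono (h' := fun s => h' s + K * s ^ (-b))
    · exact fun s hs => (hd s hs).add (key s hs)
    · intro s hs; have := abs_le.1 (hn s hs); linarith
  · apply ax_mono (h' := fun s => - h' s + K * s ^ (-b))
    · exact fun s hs => (hd s hs).neg.add (key s hs)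
    · intro s hs; have := abs_le.1 (hn s hs); linarith

lemma ax_bd {h' : ℝ → ℝ} {b l K : ℝ} (ht : Tendsto (fun s => s ^ b * h' s) (𝓝[>] 0) (𝓝 l))
    (hK : |l| < K) : ∀ᶠ s in 𝓝[>] (0:ℝ), |h' s| ≤ K * s ^ (-b) := by
  filter_upwards [ht.abs.eventually (gt_mem_nhds hK), ax_pos] with s hs h0
  rw [Real.rpow_neg h0.le, abs_mul, abs_of_pos (Real.rpow_pos_of_pos h0 b)] at *
  have := Real.rpow_pos_of_pos h0 b
  rw [← div_eq_mul_inv, le_div_iff₀ this]; linarith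

lemma ax_I0 {h h' : ℝ → ℝ} {b : ℝ} (hb : 1 < b)
    (hd : ∀ᶠ s in 𝓝[>] (0:ℝ), HasDerivAt h (h' s) s)
    (ht : Tendsto (fun s => s ^ b * h' s) (𝓝[>] 0) (𝓝 0)) :
    Tendsto (fun s => s ^ (b - 1) * h s) (𝓝[>] 0) (𝓝 0) := by
  rw [Metric.tendsto_nhds]
  intro ε hε
  obtain ⟨c, hc, H⟩ := ax_ev (hd.and (ax_bd (K := ε / 2 * (b - 1)) ht
    (by rw [abs_zero]; apply mul_pos (by linarith) (by linarith))))
  obtain ⟨m1, m2⟩ := ax_incr hb.ne' (fun s hs => (H s hs).1) (fun s hs => (H s hs).2)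
  have hs0 : c / 2 ∈ Set.Ioo 0 c := ⟨by linarith, by linarith⟩
  have hK : ε / 2 * (b - 1) / (1 - b) = - (ε / 2) := by
    rw [div_eq_iff (by linarith)]; ring
  simp only [hK] at m1 m2
  set C := |h (c/2)| with hC
  have hz := (ax_rpow_zero (b := b - 1) (by linarith)).mul_const C
  rw [zero_mul] at hz
  filter_upwards [hz.eventually (gt_mem_nhds (half_pos hε)), ax_pos,
    Ioo_mem_nhdsGT (show (0:ℝ) < c / 2 by linarith)] with s hs h0 hsc
  have hsc' : s ∈ Set.Ioo 0 c := ⟨hsc.1, by linarith [hsc.2]⟩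
  have e1 := m1 hsc' hs0 hsc.2.le
  have e2 := m2 hsc' hs0 hsc.2.le
  simp only at e1 e2
  have p1 := Real.rpow_pos_of_pos h0 (b - 1)
  have p2 : s ^ (b - 1) * s ^ (1 - b) = 1 := by
    rw [← Real.rpow_add h0]; simp
  have p3 := Real.rpow_pos_of_pos hs0.1 (1 - b)
  have hh : |h s| ≤ C + ε / 2 * s ^ (1 - b) := by
    have := neg_abs_le (h (c/2)); have := le_abs_self (h (c/2))
    have := mul_pos (half_pos hε) p3
    rw [abs_le]; constructor <;> linarith
  rw [Real.dist_eq, sub_zero, abs_mul, abs_of_pos p1]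
  calc _ ≤ s ^ (b - 1) * (C + ε / 2 * s ^ (1 - b)) := by gcongr
    _ = s ^ (b-1) * C + ε / 2 * (s ^ (b - 1) * s ^ (1 - b)) := by ring
    _ < ε := by rw [p2]; linarith

lemma ax_I {h h' : ℝ → ℝ} {b l : ℝ} (hb : 1 < b)
    (hd : ∀ᶠ s in 𝓝[>] (0:ℝ), HasDerivAt h (h' s) s)
    (ht : Tendsto (fun s => s ^ b * h' s) (𝓝[>] 0) (𝓝 l)) :
    Tendsto (fun s => s ^ (b - 1) * h s) (𝓝[>] 0) (𝓝 (l / (1 - b))) := by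
  have hb1 : 1 - b ≠ 0 := by linarith
  have := ax_I0 (h := fun s => h s - l / (1 - b) * s ^ (1 - b)) (h' := fun s => h' s - l * s ^ (-b)) hb ?_ ?_
  · have h2 := this.add_const (l / (1 - b))
    rw [zero_add] at h2
    refine h2.congr' ?_
    filter_upwards [ax_pos] with s h0
    have p2 : s ^ (b - 1) * s ^ (1 - b) = 1 := by
      rw [← Real.rpow_add h0]; simp
    linear_combination (- l / (1 - b)) * p2
  · filter_upwards [hd, ax_drpow (1 - b)] with s h1 h2
    refine (h1.sub (h2.const_mul (l / (1 - b)))).congr_deriv ?_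
    rw [show 1 - b - 1 = - b by ring]; field_simp
  · have h2 := ht.sub_const l
    rw [sub_self] at h2
    refine h2.congr' ?_
    filter_upwards [ax_pos] with s h0
    have p2 : s ^ b * s ^ (-b) = 1 := by
      rw [← Real.rpow_add h0]; simp
    linear_combination (l) * p2

lemma ax_II0 {h h' : ℝ → ℝ} {b l : ℝ} (hb : b < 1)
    (hd : ∀ᶠ s in 𝓝[>] (0:ℝ), HasDerivAt h (h' s) s)
    (ht : Tendsto (fun s => s ^ b * h' s) (𝓝[>] 0) (𝓝 l)) :
    ∃ h0, Tendsto h (𝓝[>] 0) (𝓝 h0) := by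
  obtain ⟨c, hc, H⟩ := ax_ev (hd.and (ax_bd (K := |l| + 1) ht (by linarith)))
  obtain ⟨m1, m2⟩ := ax_incr hb.ne (fun s hs => (H s hs).1) (fun s hs => (H s hs).2)
  set K := (|l| + 1) / (1 - b)
  have hs0 : c / 2 ∈ Set.Ioo 0 c := ⟨by linarith, by linarith⟩
  have hK : 0 < K := by apply div_pos (by positivity) (by linarith)
  have hm1 : MonotoneOn (fun s => h s + K * s ^ (1 - b)) (Set.Ioo 0 (c/2)) :=
    m1.mono (Set.Ioo_subset_Ioo le_rfl hs0.2.le)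
  have hbd : BddBelow ((fun s => h s + K * s ^ (1 - b)) '' Set.Ioo 0 (c/2)) := by
    refine ⟨h (c/2) - K * (c/2) ^ (1 - b), ?_⟩
    rintro _ ⟨s, hs, rfl⟩
    have e2 := m2 ⟨hs.1, hs.2.trans hs0.2⟩ hs0 hs.2.le
    simp only at e2 ⊢
    have := mul_pos hK (Real.rpow_pos_of_pos hs.1 (1 - b))
    linarith
  have := hm1.tendsto_nhdsWithin_Ioo_right (Set.nonempty_Ioo.2 hs0.1) hbd
  have h3 := this.sub ((ax_rpow_zero (b := 1 - b) (by linarith)).const_mul K)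
  exact ⟨_, h3.congr (fun s => by ring)⟩

lemma ax_II {h h' : ℝ → ℝ} {b l : ℝ} (hb : b < 1)
    (hd : ∀ᶠ s in 𝓝[>] (0:ℝ), HasDerivAt h (h' s) s)
    (ht : Tendsto (fun s => s ^ b * h' s) (𝓝[>] 0) (𝓝 l)) :
    ∃ h0, Tendsto h (𝓝[>] 0) (𝓝 h0) ∧
      Tendsto (fun s => s ^ (b - 1) * (h s - h0)) (𝓝[>] 0) (𝓝 (l / (1 - b))) := by
  obtain ⟨h0, hh⟩ := ax_II0 hb hd ht
  refine ⟨h0, hh, ?_⟩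
  have := HasDerivAt.lhopital_zero_nhdsGT (f := fun s => h s - h0) (f' := h')
    (g := fun s => s ^ (1 - b)) (g' := fun s => (1 - b) * s ^ (1 - b - 1)) (l := 𝓝 (l / (1 - b)))
    (hd.mono fun s hs => hs.sub_const h0) (ax_drpow _) ?_ ?_ (ax_rpow_zero (by linarith)) ?_
  · refine this.congr' ?_
    filter_upwards [ax_pos] with s h0
    rw [show b - 1 = -(1 - b) by ring, Real.rpow_neg h0.le]; ring
  · filter_upwards [ax_pos] with s h0
    have := Real.rpow_pos_of_pos h0 (1 - b - 1)
    have : 0 < 1 - b := by linarith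
    positivity
  · simpa using hh.sub_const h0
  · refine (ht.div_const (1 - b)).congr' ?_
    filter_upwards [ax_pos] with s h0
    rw [show 1 - b - 1 = -b by ring, Real.rpow_neg h0.le]
    have := Real.rpow_pos_of_pos h0 b
    have : 0 < 1 - b := by linarith
    field_simp

/-- antiderivative -/
lemma ax_anti {k : ℝ → ℝ} {η : ℝ} (hη : 0 < η) (hk : ContinuousOn k (Set.Ioo 0 η)) :
    ∃ Φ : ℝ → ℝ, ∀ s ∈ Set.Ioo 0 η, HasDerivAt Φ (k s) s := by
  refine ⟨fun s => ∫ x in (η/2)..s, k x, fun s hs => ?_⟩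
  have h0 : η / 2 ∈ Set.Ioo 0 η := ⟨by linarith, by linarith⟩
  apply intervalIntegral.integral_hasDerivAt_right
  · apply ContinuousOn.intervalIntegrable
    apply hk.mono
    exact (Set.ordConnected_Ioo).uIcc_subset h0 hs
  · exact hk.stronglyMeasurableAtFilter isOpen_Ioo s hs
  · exact hk.continuousAt (Ioo_mem_nhds hs.1 hs.2)

/-- weak decay -/
lemma ax_A {y k : ℝ → ℝ} {κ a : ℝ} (hd : ∀ᶠ s in 𝓝[>] (0:ℝ), HasDerivAt y (- (k s * y s)) s)
    (hk : Tendsto (fun s => s * k s) (𝓝[>] 0) (𝓝 κ)) (ha : κ < a) :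
    Tendsto (fun s => s ^ a * y s) (𝓝[>] 0) (𝓝 0) := by
  obtain ⟨a', h1, h2⟩ := exists_between ha
  obtain ⟨c, hc, H⟩ := ax_ev (hd.and (hk.eventually (gt_mem_nhds h1)))
  have hm : MonotoneOn (fun s => (s ^ a' * y s) ^ 2) (Set.Ioo 0 c) := by
    apply ax_mono (h' := fun s => 2 * (s ^ a' * y s) * (s ^ a' * y s * (a' - s * k s) / s))
    · intro s hs
      have := ((Real.hasDerivAt_rpow_const (p := a') (Or.inl hs.1.ne')).mul (H s hs).1).pow 2
      refine HasDerivAt.congr_deriv this ?_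
      have := hs.1.ne'
      rw [Real.rpow_sub_one this]
      simp only [Nat.cast_ofNat, Pi.mul_apply]
      field_simp
      ring
    · intro s hs
      have h3 := (H s hs).2
      have h4 := hs.1
      have h5 : 0 < a' - s * k s := by linarith
      rw [show 2 * (s ^ a' * y s) * (s ^ a' * y s * (a' - s * k s) / s)
        = 2 * (s ^ a' * y s) ^ 2 * (a' - s * k s) / s by ring]
      positivity
  have hs0 : c / 2 ∈ Set.Ioo 0 c := ⟨by linarith, by linarith⟩
  set z0 := (c/2) ^ a' * y (c/2)
  have hz := (ax_rpow_zero (b := a - a') (by linarith)).mul_const |z0|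
  rw [zero_mul] at hz
  apply squeeze_zero_norm' _ hz
  filter_upwards [Ioo_mem_nhdsGT hs0.1] with s hs
  have e := hm ⟨hs.1, hs.2.trans hs0.2⟩ hs0 hs.2.le
  have e' := sq_le_sq.1 e
  rw [show s ^ a * y s = s ^ (a - a') * (s ^ a' * y s) by
    rw [← mul_assoc, ← Real.rpow_add hs.1]; ring_nf]
  rw [norm_mul, Real.norm_of_nonneg (Real.rpow_pos_of_pos hs.1 _).le]
  have := Real.rpow_pos_of_pos hs.1 (a - a')
  gcongr
  exact e'

/-- precise decay -/
lemma ax_A' {y k : ℝ → ℝ} {κ b η : ℝ} (hη : 0 < η) (hb : 0 < b)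
    (hd : ∀ s ∈ Set.Ioo 0 η, HasDerivAt y (- (k s * y s)) s)
    (hkc : ContinuousOn k (Set.Ioo 0 η))
    (hk : Tendsto (fun s => s ^ (1 - b) * (k s - κ / s)) (𝓝[>] 0) (𝓝 0)) :
    (∀ s ∈ Set.Ioo 0 η, y s = 0) ∨
      ∃ L, L ≠ 0 ∧ Tendsto (fun s => s ^ κ * y s) (𝓝[>] 0) (𝓝 L) := by
  obtain ⟨Φ, hΦ⟩ := ax_anti (k := fun s => k s - κ / s) hη (by
    apply hkc.sub
    apply ContinuousOn.div continuousOn_const continuousOn_id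
    intro s hs; exact hs.1.ne')
  have hΦ' : ∀ᶠ s in 𝓝[>] (0:ℝ), HasDerivAt Φ (k s - κ / s) s := by
    filter_upwards [Ioo_mem_nhdsGT hη] with s hs using hΦ s hs
  obtain ⟨Φ0, hl⟩ := ax_II0 (by linarith) hΦ' hk
  have hs0 : η / 2 ∈ Set.Ioo 0 η := ⟨by linarith, by linarith⟩
  set C := (η/2) ^ κ * y (η/2) * exp (Φ (η/2)) with hC
  have hcon : ∀ s ∈ Set.Ioo 0 η, s ^ κ * y s * exp (Φ s) = C := by
    have hder : ∀ s ∈ Set.Ioo 0 η, HasDerivAt (fun s => s ^ κ * y s * exp (Φ s)) 0 s := by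
      intro s hs
      have := ((Real.hasDerivAt_rpow_const (p := κ) (Or.inl hs.1.ne')).mul (hd s hs)).mul (hΦ s hs).exp
      refine HasDerivAt.congr_deriv this ?_
      have := hs.1.ne'
      rw [Real.rpow_sub_one this]
      simp only [Pi.mul_apply]
      field_simp
      ring
    intro s hs
    exact isOpen_Ioo.is_const_of_deriv_eq_zero isPreconnected_Ioo
      (fun s hs => (hder s hs).differentiableAt.differentiableWithinAt)
      (fun s hs => (hder s hs).deriv) hs hs0
  by_cases h0 : C = 0
  · left
    intro s hs
    have := hcon s hs
    rw [h0] at this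
    have h1 := (Real.rpow_pos_of_pos hs.1 κ).ne'
    have h2 := (exp_pos (Φ s)).ne'
    simpa [h1, h2] using this
  · right
    refine ⟨C * exp (- Φ0), mul_ne_zero h0 (exp_pos _).ne', ?_⟩
    have := ((continuous_exp.tendsto _).comp hl.neg).const_mul C
    refine this.congr' ?_
    filter_upwards [Ioo_mem_nhdsGT hη] with s hs
    rw [← hcon s hs]
    simp only [Function.comp]
    rw [mul_assoc, ← exp_add]; simp

lemma ax_2s : Tendsto (fun s : ℝ => 2 - s) (𝓝[>] 0) (𝓝 2) := by
  simpa using ax_id.const_sub (2:ℝ)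

lemma ax_fV {V f q R : ℝ → ℝ} {η b κ c : ℝ} (hη : 0 < η) (hη1 : η ≤ 1) (hb : 0 < b) (hκ : 0 < κ)
    (hV : ∀ s ∈ Set.Ioo 0 η, HasDerivAt V (f s) s) (hqc : ContinuousOn q (Set.Ioo 0 η))
    (hR : ∀ s ∈ Set.Ioo 0 η, s * (2 - s) * f s = - (q s * V s) + R s)
    (hV0 : Tendsto V (𝓝[>] 0) (𝓝 0)) (hq : Tendsto q (𝓝[>] 0) (𝓝 κ))
    (hRl : Tendsto (fun s => s ^ (-b) * R s) (𝓝[>] 0) (𝓝 c)) :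
    Tendsto (fun s => s ^ (-b) * V s) (𝓝[>] 0) (𝓝 (c / (κ + b * 2))) := by
  have hI : ∀ᶠ s in 𝓝[>] (0:ℝ), s ∈ Set.Ioo 0 η := Ioo_mem_nhdsGT hη
  obtain ⟨Ψ, hΨ⟩ := ax_anti (k := fun s => q s / (s * (2 - s))) hη (by
    apply hqc.div (by fun_prop)
    intro s hs
    have := hs.1; have : 0 < 2 - s := by linarith [hs.2]
    positivity)
  have hqpos : ∀ᶠ s in 𝓝[>] (0:ℝ), 0 < q s := hq.eventually (lt_mem_nhds hκ)
  obtain ⟨d, hd, H⟩ := ax_ev (hqpos.and hI)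
  have hm : MonotoneOn Ψ (Set.Ioo 0 d) := by
    apply ax_mono (fun s hs => hΨ s (H s hs).2)
    intro s hs
    have h1 := (H s hs).1
    have h2 := (H s hs).2
    have := h2.1; have : 0 < 2 - s := by linarith [h2.2]
    positivity
  have hbdd : ∀ᶠ s in 𝓝[>] (0:ℝ), |exp (Ψ s)| ≤ exp (Ψ (d/2)) := by
    filter_upwards [Ioo_mem_nhdsGT (half_pos hd)] with s hs
    rw [abs_exp, exp_le_exp]
    exact hm ⟨hs.1, by linarith [hs.2]⟩ ⟨half_pos hd, by linarith⟩ hs.2.le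
  have hz : ∀ g : ℝ → ℝ, Tendsto g (𝓝[>] 0) (𝓝 0) →
      Tendsto (fun s => exp (Ψ s) * g s) (𝓝[>] 0) (𝓝 0) := by
    intro g hg
    have h1 := hg.abs.const_mul (exp (Ψ (d/2)))
    rw [abs_zero, mul_zero] at h1
    apply squeeze_zero_norm' _ h1
    filter_upwards [hbdd] with s hs
    rw [norm_mul, Real.norm_eq_abs, Real.norm_eq_abs]
    gcongr
  have := HasDerivAt.lhopital_zero_nhdsGT (f := fun s => exp (Ψ s) * V s)
    (f' := fun s => exp (Ψ s) * R s / (s * (2 - s)))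
    (g := fun s => exp (Ψ s) * s ^ b)
    (g' := fun s => exp (Ψ s) * s ^ b * (q s + b * (2 - s)) / (s * (2 - s)))
    (l := 𝓝 (c / (κ + b * 2))) ?_ ?_ ?_ (hz _ hV0) (hz _ (ax_rpow_zero hb)) ?_
  · refine this.congr' ?_
    filter_upwards [ax_pos] with s h0
    rw [Real.rpow_neg h0.le]
    have := Real.rpow_pos_of_pos h0 b
    have := exp_pos (Ψ s)
    field_simp
  · filter_upwards [hI] with s hs
    refine ((hΨ s hs).exp.mul (hV s hs)).congr_deriv ?_
    have h1 := hs.1; have h2 : 0 < 2 - s := by linarith [hs.2]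
    rw [eq_div_iff (by positivity)]
    have := hR s hs
    field_simp
    linear_combination this
  · filter_upwards [hI, ax_drpow b] with s hs h3
    refine ((hΨ s hs).exp.mul h3).congr_deriv ?_
    have h1 := hs.1; have h2 : 0 < 2 - s := by linarith [hs.2]
    rw [Real.rpow_sub_one h1.ne']
    field_simp
  · filter_upwards [hI, hqpos] with s hs h3
    have h1 := hs.1; have h2 : 0 < 2 - s := by linarith [hs.2]
    have := Real.rpow_pos_of_pos h1 b
    have := exp_pos (Ψ s)
    positivity
  · have h5 := hRl.div (hq.add (ax_2s.const_mul b)) (by positivity)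
    refine h5.congr' ?_
    filter_upwards [hI, hqpos] with s hs h3
    have h1 := hs.1; have h2 : 0 < 2 - s := by linarith [hs.2]
    have := Real.rpow_pos_of_pos h1 b
    have := exp_pos (Ψ s)
    have : 0 < q s + b * (2 - s) := by positivity
    simp only [Pi.div_apply]
    rw [Real.rpow_neg h1.le]
    field_simp

lemma ax_chain {U f f1 γ γ1 G : ℝ → ℝ} {η τ a C : ℝ} (hη : 0 < η) (hη1 : η ≤ 1)
    (hU : ∀ s ∈ Set.Ioo 0 η, HasDerivAt U (f s) s)
    (hf : ∀ s ∈ Set.Ioo 0 η, HasDerivAt f (f1 s) s)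
    (hE : ∀ s ∈ Set.Ioo 0 η, HasDerivAt (fun s => s * (2 - s) * f1 s + U s * f s + 2 * U s)
      (- (γ s ^ 2 / (s * (2 - s)) + 2 * G s)) s)
    (hG : ∀ s ∈ Set.Ioo 0 η, HasDerivAt G ((1 - s) * γ s ^ 2 / (s * (2 - s)) ^ 2) s)
    (hγ : ∀ s ∈ Set.Ioo 0 η, HasDerivAt γ (γ1 s) s)
    (hlim : Tendsto U (𝓝[>] 0) (𝓝 τ)) (hτ : 2 < τ) (ha1 : 1 < a) (ha2 : a < 3 / 2)
    (hC : Tendsto (fun s => s ^ a * γ1 s) (𝓝[>] 0) (𝓝 C)) :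
    Tendsto (fun s => s ^ (a - 1) * γ s) (𝓝[>] 0) (𝓝 (C / (1 - a))) ∧
    (∃ l, Tendsto (fun s => s ^ (-(3 - 2 * a)) * (U s - τ)) (𝓝[>] 0) (𝓝 l)) ∧
    (∃ l, Tendsto (fun s => s ^ (2 * a - 2) * f s) (𝓝[>] 0) (𝓝 l)) := by
  have hI : ∀ᶠ s in 𝓝[>] (0:ℝ), s ∈ Set.Ioo 0 η := Ioo_mem_nhdsGT hη
  have t1 := ax_I ha1 (hI.mono hγ) hC
  set c1 := C / (1 - a)
  have p2 : ∀ s : ℝ, 0 < s → (s ^ (a - 1)) ^ 2 = s ^ (2 * a) / s ^ 2 := by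
    intro s hs
    rw [← Real.rpow_natCast, ← Real.rpow_mul hs.le]
    rw [show (a - 1) * ((2:ℕ):ℝ) = 2 * a - (2:ℕ) by push_cast; ring, Real.rpow_sub hs, Real.rpow_natCast]
  have t2 : Tendsto (fun s => s ^ (2 * a) * ((1 - s) * γ s ^ 2 / (s * (2 - s)) ^ 2)) (𝓝[>] 0)
      (𝓝 (c1 ^ 2 * (1 - 0) / 2 ^ 2)) := by
    refine (((t1.pow 2).mul (ax_id.const_sub 1)).div (ax_2s.pow 2) (by norm_num)).congr' ?_
    filter_upwards [hI] with s hs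
    have h1 := hs.1; have h2 : 0 < 2 - s := by linarith [hs.2]
    simp only [Pi.div_apply]
    rw [mul_pow, p2 s h1]
    field_simp
  have t3 := ax_I (by linarith) (hI.mono hG) t2
  set c2 := (c1 ^ 2 * (1 - 0) / 2 ^ 2) / (1 - 2 * a)
  have t4 : Tendsto (fun s => s ^ (2 * a - 1) * (- (γ s ^ 2 / (s * (2 - s)) + 2 * G s))) (𝓝[>] 0)
      (𝓝 (-(c1 ^ 2 / 2 + 2 * c2))) := by
    refine (((t1.pow 2).div ax_2s (by norm_num)).add (t3.const_mul 2)).neg.congr' ?_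
    filter_upwards [hI] with s hs
    have h1 := hs.1; have h2 : 0 < 2 - s := by linarith [hs.2]
    simp only [Pi.div_apply]
    rw [mul_pow, p2 s h1, Real.rpow_sub_one h1.ne']
    field_simp
  have t5 := ax_I (by linarith) (hI.mono hE) t4
  set c4 := (-(c1 ^ 2 / 2 + 2 * c2)) / (1 - (2 * a - 1))
  have hJ : ∀ s ∈ Set.Ioo 0 η, HasDerivAt (fun s => s * (2 - s) * f s + 2 * (s - 1) * U s + U s ^ 2 / 2)
      (s * (2 - s) * f1 s + U s * f s + 2 * U s) s := by
    intro s hs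
    have e1 := ((hasDerivAt_id s).mul ((hasDerivAt_id s).const_sub 2)).mul (hf s hs)
    have e2 := ((((hasDerivAt_id s).sub_const 1).const_mul 2).mul (hU s hs))
    have e3 := ((hU s hs).pow 2).div_const 2
    refine ((e1.add e2).add e3).congr_deriv ?_
    simp
    ring
  obtain ⟨J0, t6, t7⟩ := ax_II (b := 2 * a - 1 - 1) (by linarith) (hI.mono hJ) t5
  set c5 := c4 / (1 - (2 * a - 1 - 1))
  -- J0
  have hJ0 : J0 + 2 * τ - τ ^ 2 / 2 = 0 := by
    have t8 : Tendsto (fun s => s * f s) (𝓝[>] 0) (𝓝 ((J0 - 2 * (0 - 1) * τ - τ ^ 2 / 2) / 2)) := by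
      refine (((t6.sub (((ax_id.sub_const 1).const_mul 2).mul hlim)).sub
        ((hlim.pow 2).div_const 2)).div ax_2s (by norm_num)).congr' ?_
      filter_upwards [hI] with s hs
      have h1 := hs.1; have h2 : 0 < 2 - s := by linarith [hs.2]
      simp only [Pi.div_apply]
      field_simp
      ring
    have := HasDerivAt.lhopital_zero_nhdsGT (f := fun s => s * U s)
      (f' := fun s => U s + s * f s) (g := fun s => s) (g' := fun s => 1) (a := 0)
      (l := 𝓝 (τ + ((J0 - 2 * (0 - 1) * τ - τ ^ 2 / 2) / 2))) ?_ ?_ ?_ ?_ ax_id ?_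
    · have h2 : Tendsto U (𝓝[>] 0) (𝓝 (τ + ((J0 - 2 * (0 - 1) * τ - τ ^ 2 / 2) / 2))) := by
        refine this.congr' ?_
        filter_upwards [ax_pos] with s h0
        field_simp
      have := tendsto_nhds_unique hlim h2
      linarith
    · filter_upwards [hI] with s hs
      refine ((hasDerivAt_id s).mul (hU s hs)).congr_deriv ?_
      simp
    · exact Eventually.of_forall fun s => hasDerivAt_id s
    · exact Eventually.of_forall fun s => one_ne_zero
    · simpa using ax_id.mul hlim
    · simpa using hlim.add t8
  have hR : Tendsto (fun s => s ^ (-(3 - 2 * a)) *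
      (s * (2 - s) * f s + 2 * (s - 1) * U s + U s ^ 2 / 2 - J0 - 2 * s * U s)) (𝓝[>] 0) (𝓝 c5) := by
    have e1 := ((ax_rpow_zero (b := 2 * a - 2) (by linarith)).const_mul 2).mul hlim
    have e2 := t7.sub e1
    rw [mul_zero, zero_mul, sub_zero] at e2
    refine e2.congr' ?_
    filter_upwards [hI] with s hs
    have h1 := hs.1
    rw [show 2 * a - 2 = -(3 - 2 * a) + 1 by ring, show 2 * a - 1 - 1 - 1 = -(3 - 2 * a) by ring,
      Real.rpow_add_one h1.ne']
    ring
  have hq : Tendsto (fun s => (U s + τ) / 2 - 2) (𝓝[>] 0) (𝓝 (τ - 2)) := by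
    convert ((hlim.add_const τ).div_const 2).sub_const 2 using 2
    ring
  have hUc : ContinuousOn U (Set.Ioo 0 η) :=
    fun s hs => (hU s hs).continuousAt.continuousWithinAt
  have hV := ax_fV (V := fun s => U s - τ) (f := f) (q := fun s => (U s + τ) / 2 - 2) hη hη1
    (b := 3 - 2 * a) (by linarith) (κ := τ - 2) (by linarith)
    (fun s hs => (hU s hs).sub_const τ)
    (((hUc.add continuousOn_const).div_const 2).sub continuousOn_const)
    (fun s hs => by linear_combination hJ0) (by simpa using hlim.sub_const τ) hq hR
  refine ⟨t1, ⟨_, hV⟩, ⟨(-((τ - 2) * (c5 / (τ - 2 + (3 - 2 * a) * 2))) + c5) / 2, ?_⟩⟩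
  · refine (((hq.mul hV).neg.add hR).div ax_2s (by norm_num)).congr' ?_
    filter_upwards [hI] with s hs
    have h1 := hs.1; have h2 : 0 < 2 - s := by linarith [hs.2]
    simp only [Pi.div_apply]
    rw [show 2 * a - 2 = -(3 - 2 * a) + 1 by ring, Real.rpow_add_one h1.ne', div_eq_iff h2.ne']
    linear_combination -s ^ (-(3 - 2 * a)) * hJ0

theorem ax_main {U f f1 γ γ1 G : ℝ → ℝ} {η τ : ℝ} (hη : 0 < η) (hη1 : η ≤ 1)
    (hU : ∀ s ∈ Set.Ioo 0 η, HasDerivAt U (f s) s)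
    (hf : ∀ s ∈ Set.Ioo 0 η, HasDerivAt f (f1 s) s)
    (hE : ∀ s ∈ Set.Ioo 0 η, HasDerivAt (fun s => s * (2 - s) * f1 s + U s * f s + 2 * U s)
      (- (γ s ^ 2 / (s * (2 - s)) + 2 * G s)) s)
    (hG : ∀ s ∈ Set.Ioo 0 η, HasDerivAt G ((1 - s) * γ s ^ 2 / (s * (2 - s)) ^ 2) s)
    (hγ : ∀ s ∈ Set.Ioo 0 η, HasDerivAt γ (γ1 s) s)
    (hγ1 : ∀ s ∈ Set.Ioo 0 η, HasDerivAt γ1 (- (U s / (s * (2 - s)) * γ1 s)) s)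
    (hlim : Tendsto U (𝓝[>] 0) (𝓝 τ)) (hτ : 2 < τ) (hτ3 : τ < 3) :
    ((∃ c, ∀ s ∈ Set.Ioo 0 η, γ s = c) ∨
      ∃ L, L ≠ 0 ∧ Tendsto (fun s => s ^ (τ / 2 - 1) * γ s) (𝓝[>] 0) (𝓝 L)) ∧
    (∃ L, Tendsto (fun s => s ^ (τ - 2) * f s) (𝓝[>] 0) (𝓝 L)) := by
  have hI : ∀ᶠ s in 𝓝[>] (0:ℝ), s ∈ Set.Ioo 0 η := Ioo_mem_nhdsGT hη
  obtain ⟨a, ha1, ha2⟩ := exists_between (show τ / 2 < 3 / 2 by linarith)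
  have hk : Tendsto (fun s => s * (U s / (s * (2 - s)))) (𝓝[>] 0) (𝓝 (τ / 2)) := by
    refine (hlim.div ax_2s (by norm_num)).congr' ?_
    filter_upwards [hI] with s hs
    have h1 := hs.1; have h2 : 0 < 2 - s := by linarith [hs.2]
    simp only [Pi.div_apply]
    field_simp
  have w := ax_A (hI.mono hγ1) hk ha1
  obtain ⟨-, ⟨l, hl⟩, -⟩ := ax_chain hη hη1 hU hf hE hG hγ hlim hτ (by linarith) ha2 w
  set b := (3 - 2 * a) / 2 with hb
  have hb0 : 0 < b := by rw [hb]; linarith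
  have hb1 : b < 1 := by rw [hb]; linarith
  have key := ax_A' (κ := τ / 2) (b := b) hη hb0 hγ1 (by
    apply ContinuousOn.div (fun s hs => (hU s hs).continuousAt.continuousWithinAt) (by fun_prop)
    intro s hs
    have h1 := hs.1; have h2 : 0 < 2 - s := by linarith [hs.2]
    positivity) (by
    have e1 := (((hl.mul (ax_rpow_zero hb0)).const_mul 2).add
      ((ax_rpow_zero (b := 1 - b) (by linarith)).const_mul τ)).div (ax_2s.const_mul 2) (by norm_num)
    simp only [mul_zero, add_zero, zero_div] at e1
    refine e1.congr' ?_
    filter_upwards [hI] with s hs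
    have h1 := hs.1; have h2 : 0 < 2 - s := by linarith [hs.2]
    simp only [Pi.div_apply]
    have e2 : s ^ (-(3 - 2 * a)) = s ^ (-b) * s ^ (-b) := by
      rw [← Real.rpow_add h1, hb]; ring_nf
    rw [e2, show 1 - b = 1 + -b by ring, Real.rpow_add h1, Real.rpow_one, Real.rpow_neg h1.le]
    have := Real.rpow_pos_of_pos h1 b
    field_simp
    ring)
  have hp : 1 < τ / 2 := by linarith
  have hp' : τ / 2 < 3 / 2 := by linarith
  have e3 : 2 * (τ / 2) - 2 = τ - 2 := by ring
  rcases key with key | ⟨L, hL, key⟩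
  · have c0 : Tendsto (fun s => s ^ (τ / 2) * γ1 s) (𝓝[>] 0) (𝓝 0) := by
      refine tendsto_const_nhds.congr' ?_
      filter_upwards [hI] with s hs
      rw [key s hs, mul_zero]
    obtain ⟨h1, h2, h3⟩ := ax_chain hη hη1 hU hf hE hG hγ hlim hτ hp hp' c0
    rw [e3] at h3
    refine ⟨Or.inl ⟨γ (η/2), fun s hs => ?_⟩, h3⟩
    exact isOpen_Ioo.is_const_of_deriv_eq_zero isPreconnected_Ioo
      (fun s hs => (hγ s hs).differentiableAt.differentiableWithinAt)
      (fun s hs => by rw [(hγ s hs).deriv]; exact key s hs) hs ⟨half_pos hη, half_lt_self hη⟩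
  · obtain ⟨h1, h2, h3⟩ := ax_chain hη hη1 hU hf hE hG hγ hlim hτ hp hp' key
    rw [e3] at h3
    exact ⟨Or.inr ⟨_, div_ne_zero hL (by linarith), h1⟩, h3⟩

lemma bx_pd {F : V3 → ℝ} {L : V3 →L[ℝ] ℝ} {x : V3} (h : HasFDerivAt F L x) (j : Fin 3) :
    pd j F x = L (e3 j) := by simp [pd, h.fderiv]

lemma bx_pd_congr {F G : V3 → ℝ} {x : V3} (h : F =ᶠ[𝓝 x] G) (j : Fin 3) : pd j F x = pd j G x := by
  simp [pd, h.fderiv_eq]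

lemma bx_lap_congr {F G : V3 → ℝ} {x : V3} (h : F =ᶠ[𝓝 x] G) : lap3 F x = lap3 G x := by
  unfold lap3
  refine Finset.sum_congr rfl fun j _ => bx_pd_congr ?_ j
  filter_upwards [h.eventuallyEq_nhds] with y hy using bx_pd_congr hy j

lemma bx_coord (i : Fin 3) (x : V3) :
    HasFDerivAt (fun y : V3 => y i) (EuclideanSpace.proj i : V3 →L[ℝ] ℝ) x :=
  (EuclideanSpace.proj i : V3 →L[ℝ] ℝ).hasFDerivAt

lemma bx_proj (i j : Fin 3) : (EuclideanSpace.proj i : V3 →L[ℝ] ℝ) (e3 j) = if i = j then 1 else 0 := by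
  simp [e3]

lemma bx_normsq (x : V3) : ‖x‖ ^ 2 = x 0 ^ 2 + x 1 ^ 2 + x 2 ^ 2 := by
  rw [EuclideanSpace.norm_sq_eq, Fin.sum_univ_three]; simp

lemma bx_norm {x : V3} (hx : x ≠ 0) :
    ∃ L : V3 →L[ℝ] ℝ, HasFDerivAt (fun y : V3 => ‖y‖) L x ∧ ∀ j, L (e3 j) = x j / ‖x‖ := by
  have h0 : ‖x‖ ≠ 0 := norm_ne_zero_iff.2 hx
  have hd : DifferentiableAt ℝ (fun y : V3 => ‖y‖) x := differentiableAt_id.norm ℝ hx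
  refine ⟨fderiv ℝ (fun y : V3 => ‖y‖) x, hd.hasFDerivAt, fun j => ?_⟩
  have h1 := hd.hasFDerivAt.pow 2
  have h2 : HasFDerivAt (fun y : V3 => ‖y‖ ^ 2) _ x :=
    ((((bx_coord 0 x).pow 2).add ((bx_coord 1 x).pow 2)).add ((bx_coord 2 x).pow 2)).congr_of_eventuallyEq
      (Eventually.of_forall fun y => bx_normsq y)
  have h3 := congrArg (fun L : V3 →L[ℝ] ℝ => L (e3 j)) (h1.unique h2)
  simp at h3
  rw [eq_div_iff h0]
  fin_cases j <;> simp [e3] at h3 ⊢ <;> linarith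

lemma bx_div {F H : V3 → ℝ} {L N : V3 →L[ℝ] ℝ} {x : V3} (h1 : HasFDerivAt F L x)
    (h2 : HasFDerivAt H N x) (h0 : H x ≠ 0) :
    HasFDerivAt (fun y => F y / H y) ((H x)⁻¹ • L - (F x / H x ^ 2) • N) x := by
  have h3 : HasFDerivAt (fun y => (H y)⁻¹) (-(H x ^ 2)⁻¹ • N) x :=
    (hasDerivAt_inv h0).comp_hasFDerivAt x h2
  have h4 : HasFDerivAt (fun y => F y / H y) _ x := h1.mul h3
  refine h4.congr_fderiv ?_
  ext v
  simp only [add_apply, sub_apply,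
      smul_apply, smul_eq_mul]
  ring

lemma bx_t {x : V3} (hx : x ≠ 0) :
    ∃ L : V3 →L[ℝ] ℝ, HasFDerivAt (fun y : V3 => y 2 / ‖y‖) L x ∧
      ∀ j, L (e3 j) = (if (2 : Fin 3) = j then 1 else 0) / ‖x‖ - x 2 * x j / ‖x‖ ^ 3 := by
  have h0 : ‖x‖ ≠ 0 := norm_ne_zero_iff.2 hx
  obtain ⟨N, hN, hN'⟩ := bx_norm hx
  refine ⟨_, bx_div (bx_coord 2 x) hN h0, fun j => ?_⟩
  simp only [sub_apply, smul_apply, bx_proj, hN', smul_eq_mul]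
  field_simp

lemma bx_pd_comp {F : V3 → ℝ} {f : ℝ → ℝ} {f1 : ℝ} {x : V3} (hx : x ≠ 0)
    (hF : F =ᶠ[𝓝 x] fun y => f (y 2 / ‖y‖)) (hf : HasDerivAt f f1 (x 2 / ‖x‖)) (j : Fin 3) :
    pd j F x = f1 * ((if (2 : Fin 3) = j then 1 else 0) / ‖x‖ - x 2 * x j / ‖x‖ ^ 3) := by
  obtain ⟨L, hL, hL'⟩ := bx_t hx
  rw [bx_pd_congr hF]
  refine (bx_pd (hf.comp_hasFDerivAt x hL) j).trans ?_
  simp [hL']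

lemma bx_lap_comp {F : V3 → ℝ} {f f1 : ℝ → ℝ} {f2 : ℝ} {x : V3} (hx : ‖x‖ = 1)
    (hF : F =ᶠ[𝓝 x] fun y => f (y 2 / ‖y‖)) (hf : ∀ᶠ t in 𝓝 (x 2), HasDerivAt f (f1 t) t)
    (hf1 : HasDerivAt f1 f2 (x 2)) :
    lap3 F x = (1 - x 2 ^ 2) * f2 - 2 * x 2 * f1 (x 2) := by
  have hx0 : x ≠ 0 := by intro h; simp [h] at hx
  obtain ⟨L, hL, hL'⟩ := bx_t hx0
  obtain ⟨N, hN, hN'⟩ := bx_norm hx0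
  have hxt : x 2 / ‖x‖ = x 2 := by rw [hx, div_one]
  have key : ∀ j, (fun y => pd j F y) =ᶠ[𝓝 x] fun y => f1 (y 2 / ‖y‖) *
      ((if (2 : Fin 3) = j then 1 else 0) / ‖y‖ - y 2 * y j / ‖y‖ ^ 3) := by
    intro j
    have h1 : Tendsto (fun y : V3 => y 2 / ‖y‖) (𝓝 x) (𝓝 (x 2)) := by
      have := hL.continuousAt.tendsto; rwa [hxt] at this
    filter_upwards [hF.eventuallyEq_nhds, h1.eventually hf, isOpen_ne.mem_nhds hx0] with y h2 h3 h4
    exact bx_pd_comp h4 h2 h3 j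
  have e : ∀ j, pd j (fun y => pd j F y) x =
      f2 * ((if (2 : Fin 3) = j then 1 else 0) - x 2 * x j) ^ 2 +
      f1 (x 2) * (- 2 * (if (2 : Fin 3) = j then 1 else 0) * x j - x 2 + 3 * x 2 * x j ^ 2) := by
    intro j
    rw [bx_pd_congr (key j)]
    have hne : ‖x‖ ≠ 0 := by rw [hx]; norm_num
    have d1 : HasFDerivAt (fun y : V3 => f1 (y 2 / ‖y‖)) _ x :=
      HasDerivAt.comp_hasFDerivAt x (h₂ := f1) (h₂' := f2) (by rwa [hxt]) hL
    have d2 := bx_div (hasFDerivAt_const ((if (2 : Fin 3) = j then 1 else 0) : ℝ) x) hN hne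
    have d3 := bx_div ((bx_coord 2 x).mul (bx_coord j x)) (hN.pow 3) (pow_ne_zero 3 hne)
    refine (bx_pd (d1.mul (d2.sub d3)) j).trans ?_
    simp only [add_apply, sub_apply,
      smul_apply, bx_proj, hN', hL', smul_eq_mul, hx]
    simp [hx]
    split_ifs with h
    · subst h; ring
    · ring
  unfold lap3
  rw [Fin.sum_univ_three, e, e, e]
  have hn := bx_normsq x
  rw [hx] at hn
  simp
  linear_combination (-f2 * x 2 ^ 2 - 3 * f1 (x 2) * x 2) * hn

lemma bx_pd_mul {w : V3 → ℝ} {x : V3} (i j : Fin 3) (hw : DifferentiableAt ℝ w x) :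
    pd j (fun y => y i * w y) x = (if i = j then 1 else 0) * w x + x i * pd j w x := by
  refine (bx_pd ((bx_coord i x).mul hw.hasFDerivAt) j).trans ?_
  simp only [add_apply, smul_apply, bx_proj, smul_eq_mul, pd]
  ring

lemma bx_pd_diff {w : V3 → ℝ} {x : V3} (hw : ContDiffAt ℝ 2 w x) (j : Fin 3) :
    DifferentiableAt ℝ (fun y => pd j w y) x := by
  have : ContDiffAt ℝ 1 (fderiv ℝ w) x := hw.fderiv_right (by norm_num)
  exact (this.differentiableAt (by norm_num)).clm_apply (differentiableAt_const _)

lemma bx_ev_diff {w : V3 → ℝ} {x : V3} (hw : ContDiffAt ℝ 2 w x) :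
    ∀ᶠ y in 𝓝 x, DifferentiableAt ℝ w y := by
  filter_upwards [hw.eventually (by simp)] with y hy using hy.differentiableAt (by norm_num)

lemma bx_lap_mul {w : V3 → ℝ} {x : V3} (i : Fin 3) (hw : ContDiffAt ℝ 2 w x) :
    lap3 (fun y => y i * w y) x = x i * lap3 w x + 2 * pd i w x := by
  unfold lap3
  have e : ∀ j, pd j (fun y => pd j (fun y => y i * w y) y) x =
      2 * (if i = j then 1 else 0) * pd j w x + x i * pd j (fun y => pd j w y) x := by
    intro j
    have h1 : (fun y => pd j (fun y => y i * w y) y) =ᶠ[𝓝 x]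
        fun y => (if i = j then 1 else 0) * w y + y i * pd j w y := by
      filter_upwards [bx_ev_diff hw] with y hy using bx_pd_mul i j hy
    rw [bx_pd_congr h1]
    have d1 := (hw.differentiableAt (by norm_num)).hasFDerivAt.const_mul ((if i = j then 1 else 0) : ℝ)
    have d2 := (bx_coord i x).mul (bx_pd_diff hw j).hasFDerivAt
    refine (bx_pd (d1.add d2) j).trans ?_
    simp only [add_apply, smul_apply, bx_proj, smul_eq_mul]
    simp only [pd]
    ring
  simp only [e]
  rw [Finset.sum_add_distrib, Finset.mul_sum, add_comm]
  congr 1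
  simp

lemma bx_pd_lin {v w : V3 → ℝ} {x : V3} (a : ℝ) (j : Fin 3) (hv : DifferentiableAt ℝ v x)
    (hw : DifferentiableAt ℝ w x) :
    pd j (fun y => v y + a * w y) x = pd j v x + a * pd j w x := by
  refine (bx_pd (hv.hasFDerivAt.add (hw.hasFDerivAt.const_mul a)) j).trans ?_
  simp [pd]

lemma bx_lap_lin {v w : V3 → ℝ} {x : V3} (a : ℝ) (hv : ContDiffAt ℝ 2 v x) (hw : ContDiffAt ℝ 2 w x) :
    lap3 (fun y => v y + a * w y) x = lap3 v x + a * lap3 w x := by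
  unfold lap3
  rw [Finset.mul_sum, ← Finset.sum_add_distrib]
  refine Finset.sum_congr rfl fun j _ => ?_
  rw [← bx_pd_lin a j (bx_pd_diff hv j) (bx_pd_diff hw j)]
  apply bx_pd_congr
  filter_upwards [bx_ev_diff hv, bx_ev_diff hw] with y h1 h2 using bx_pd_lin a j h1 h2

lemma cx_alg {x0 x1 t u0 u1 u2 d00 d01 d02 d10 d11 d12 d20 d21 d22 l0 l1 l2 p0 p1 p2
    m m1 m2 γ γ1 γ2 g g1 g2 : ℝ} (ht : t ≠ 0) (hw : 1 - t ^ 2 ≠ 0) (hn : x0 ^ 2 + x1 ^ 2 = 1 - t ^ 2)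
    (vM : x0 * u0 + x1 * u1 = m) (vG : x0 * u1 - x1 * u0 = γ) (vN : t * u2 = t * g)
    (M0 : u0 + x0 * d00 + x1 * d01 = m1 * (-(t * x0)))
    (M1 : u1 + x0 * d10 + x1 * d11 = m1 * (-(t * x1)))
    (M2 : x0 * d20 + x1 * d21 = m1 * (1 - t ^ 2))
    (G0 : u1 + x0 * d01 - x1 * d00 = γ1 * (-(t * x0)))
    (G1 : -u0 + x0 * d11 - x1 * d10 = γ1 * (-(t * x1)))
    (G2 : x0 * d21 - x1 * d20 = γ1 * (1 - t ^ 2))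
    (N0 : t * d02 = (g + t * g1) * (-(t * x0)))
    (N1 : t * d12 = (g + t * g1) * (-(t * x1)))
    (N2 : u2 + t * d22 = (g + t * g1) * (1 - t ^ 2))
    (LM : x0 * l0 + x1 * l1 + 2 * (d00 + d11) = (1 - t ^ 2) * m2 - 2 * t * m1)
    (LG : x0 * l1 - x1 * l0 + 2 * (d01 - d10) = (1 - t ^ 2) * γ2 - 2 * t * γ1)
    (LN : t * l2 + 2 * d22 = (1 - t ^ 2) * (2 * g1 + t * g2) - 2 * t * (g + t * g1))
    (NS0 : -l0 + (u0 * d00 + u1 * d10 + u2 * d20) + p0 = 0)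
    (NS1 : -l1 + (u0 * d01 + u1 * d11 + u2 * d21) + p1 = 0)
    (NS2 : -l2 + (u0 * d02 + u1 * d12 + u2 * d22) + p2 = 0)
    (dv : d00 + d11 + d22 = 0) :
    (x0 * p1 - x1 * p0 = (1 - t ^ 2) * γ2 + (t * (m + t * g) - g) * γ1) ∧
    ((1 - t ^ 2) * g1 - t * g = t * m1) ∧
    ((1 - t ^ 2) * ((1 - t ^ 2) * (m2 + (2 * g1 + t * g2)) - 2 * t * (m1 + (g + t * g1))
      + (t * (m + t * g) - g) * (m1 + (g + t * g1)) - (x0 * p0 + x1 * p1 + t * p2))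
      + (1 - t ^ 2) * (m + t * g) ^ 2 + (t * (m + t * g) - g) ^ 2 + γ ^ 2 = 0) ∧
    (-((1 - t ^ 2) * g2 - 2 * t * g1) - m * (g + t * g1) + g * (g1 * (1 - t ^ 2) - t * g) + p2 = 0) := by
  have hg : u2 = g := mul_left_cancel₀ ht vN
  have e02 : d02 = -((g + t * g1) * x0) := mul_left_cancel₀ ht (by linear_combination N0)
  have e12 : d12 = -((g + t * g1) * x1) := mul_left_cancel₀ ht (by linear_combination N1)
  have e22 : d22 = g1 * (1 - t ^ 2) - t * g := mul_left_cancel₀ ht (by linear_combination N2 - hg)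
  have hω : d01 - d10 = -(t * γ1) := mul_left_cancel₀ hw (by
    linear_combination x0 * G0 + x1 * G1 - (x0 * M1 - x1 * M0) - (d01 - d10 + t * γ1) * hn)
  have hS : d00 + d11 = -(t * m1) := mul_left_cancel₀ hw (by
    linear_combination x0 * M0 + x1 * M1 + x0 * G1 - x1 * G0 - (d00 + d11 + t * m1) * hn)
  have hl2 : l2 = (1 - t ^ 2) * g2 - 2 * t * g1 := mul_left_cancel₀ ht (by
    linear_combination LN - 2 * e22)
  have hsq : (1 - t ^ 2) * (u0 ^ 2 + u1 ^ 2) = m ^ 2 + γ ^ 2 := by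
    rw [← vM, ← vG, ← hn]; ring
  refine ⟨?_, ?_, ?_, ?_⟩
  · linear_combination x0 * NS1 - x1 * NS0 + LG - 2 * hω - u0 * G0 - u1 * G1 - u2 * G2
      + γ1 * t * vM - γ1 * (1 - t ^ 2) * hg
  · linear_combination dv - hS - e22
  · have A : -((1 - t ^ 2) * (m2 + (2 * g1 + t * g2)) - 2 * t * (m1 + (g + t * g1)))
        - (u0 ^ 2 + u1 ^ 2 + g ^ 2) - (m1 + (g + t * g1)) * (t * m - (1 - t ^ 2) * g)
        + (x0 * p0 + x1 * p1 + t * p2) = 0 := by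
      subst hg
      linear_combination x0 * NS0 + x1 * NS1 + t * NS2 + LM + LN - 2 * dv - u0 * (M0 + N0)
        - u1 * (M1 + N1) - u2 * (M2 + N2) + (m1 + (u2 + t * g1)) * t * vM
    linear_combination (-(1 - t ^ 2)) * A - hsq
  · rw [hl2, e02, e12, e22, hg] at NS2
    linear_combination NS2 + (g + t * g1) * vM

theorem cx_point {u : V3 → V3} {p : V3 → ℝ} {x : V3} (hx : ‖x‖ = 1)
    (hu : ∀ i, ContDiffAt ℝ 2 (fun z => u z i) x) (hNS : NSEq u p x) (h2 : x 2 ≠ 0)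
    (hw : 1 - x 2 ^ 2 ≠ 0) {m g γ m1 g1 γ1 : ℝ → ℝ} {m2 g2 γ2 : ℝ}
    (hM : (fun y : V3 => y 0 * u y 0 + 1 * (y 1 * u y 1)) =ᶠ[𝓝 x] fun y => m (y 2 / ‖y‖))
    (hG : (fun y : V3 => y 0 * u y 1 + (-1) * (y 1 * u y 0)) =ᶠ[𝓝 x] fun y => γ (y 2 / ‖y‖))
    (hN : (fun y : V3 => y 2 * u y 2) =ᶠ[𝓝 x] fun y => (fun t => t * g t) (y 2 / ‖y‖))
    (dm : ∀ᶠ t in 𝓝 (x 2), HasDerivAt m (m1 t) t) (dm1 : HasDerivAt m1 m2 (x 2))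
    (dg : ∀ᶠ t in 𝓝 (x 2), HasDerivAt g (g1 t) t) (dg1 : HasDerivAt g1 g2 (x 2))
    (dγ : ∀ᶠ t in 𝓝 (x 2), HasDerivAt γ (γ1 t) t) (dγ1 : HasDerivAt γ1 γ2 (x 2)) :
    let t := x 2
    (x 0 * pd 1 p x - x 1 * pd 0 p x = (1 - t ^ 2) * γ2 + (t * (m t + t * g t) - g t) * γ1 t) ∧
    ((1 - t ^ 2) * g1 t - t * g t = t * m1 t) ∧
    ((1 - t ^ 2) * ((1 - t ^ 2) * (m2 + (2 * g1 t + t * g2)) - 2 * t * (m1 t + (g t + t * g1 t))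
      + (t * (m t + t * g t) - g t) * (m1 t + (g t + t * g1 t))
      - (x 0 * pd 0 p x + x 1 * pd 1 p x + t * pd 2 p x))
      + (1 - t ^ 2) * (m t + t * g t) ^ 2 + (t * (m t + t * g t) - g t) ^ 2 + γ t ^ 2 = 0) ∧
    (-((1 - t ^ 2) * g2 - 2 * t * g1 t) - m t * (g t + t * g1 t)
      + g t * (g1 t * (1 - t ^ 2) - t * g t) + pd 2 p x = 0) := by
  intro t
  have hx0 : x ≠ 0 := by intro h; simp [h] at hx
  have hxt : x 2 / ‖x‖ = x 2 := by rw [hx, div_one]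
  have hn := bx_normsq x
  rw [hx] at hn
  have du : ∀ i, DifferentiableAt ℝ (fun z => u z i) x := fun i => (hu i).differentiableAt (by norm_num)
  have cc : ∀ i, ContDiffAt ℝ 2 (fun y : V3 => y i) x := fun i =>
    (EuclideanSpace.proj i : V3 →L[ℝ] ℝ).contDiff.contDiffAt
  have dc : ∀ i, DifferentiableAt ℝ (fun y : V3 => y i) x := fun i => (bx_coord i x).differentiableAt
  have dn : ∀ᶠ t in 𝓝 (x 2), HasDerivAt (fun t => t * g t) (g t + t * g1 t) t := by
    filter_upwards [dg] with t ht
    refine ((hasDerivAt_id t).mul ht).congr_deriv ?_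
    simp
  have dn1 : HasDerivAt (fun t => g t + t * g1 t) (2 * g1 (x 2) + x 2 * g2) (x 2) := by
    refine (dg.self_of_nhds.add ((hasDerivAt_id (x 2)).mul dg1)).congr_deriv ?_
    simp; ring
  have pM := fun j => bx_pd_comp hx0 hM (by rw [hxt]; exact dm.self_of_nhds) j
  have pG := fun j => bx_pd_comp hx0 hG (by rw [hxt]; exact dγ.self_of_nhds) j
  have pN := fun j => bx_pd_comp hx0 hN (by rw [hxt]; exact dn.self_of_nhds) j
  have lM := bx_lap_comp hx hM dm dm1
  have lG := bx_lap_comp hx hG dγ dγ1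
  have lN := bx_lap_comp hx hN dn dn1
  rw [bx_lap_lin 1 ((cc 0).mul (hu 0)) ((cc 1).mul (hu 1)), bx_lap_mul 0 (hu 0), bx_lap_mul 1 (hu 1)] at lM
  rw [bx_lap_lin (-1) ((cc 0).mul (hu 1)) ((cc 1).mul (hu 0)), bx_lap_mul 0 (hu 1), bx_lap_mul 1 (hu 0)] at lG
  rw [bx_lap_mul 2 (hu 2)] at lN
  have qM := fun j => (bx_pd_lin 1 j ((dc 0).mul (du 0)) ((dc 1).mul (du 1))).symm.trans (pM j)
  have qG := fun j => (bx_pd_lin (-1) j ((dc 0).mul (du 1)) ((dc 1).mul (du 0))).symm.trans (pG j)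
  have qM' := fun j => (bx_pd_mul 0 j (du 0)).symm.trans (eq_sub_of_add_eq (qM j))
  have qG' := fun j => (bx_pd_mul 0 j (du 1)).symm.trans (eq_sub_of_add_eq (qG j))
  have r10 := fun j => bx_pd_mul 1 j (du 0)
  have r11 := fun j => bx_pd_mul 1 j (du 1)
  have qN' := fun j => (bx_pd_mul 2 j (du 2)).symm.trans (pN j)
  have r10' : ∀ j, pd j ((fun y : V3 => y 1) * fun z => u z 0) x = _ := r10
  have r11' : ∀ j, pd j ((fun y : V3 => y 1) * fun z => u z 1) x = _ := r11
  simp only [r10', r11'] at qM' qG'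
  have vM := hM.eq_of_nhds
  have vG := hG.eq_of_nhds
  have vN := hN.eq_of_nhds
  simp only [hxt] at vM vG vN
  obtain ⟨hNS, hdv⟩ := hNS
  have s0 := hNS 0
  have s1 := hNS 1
  have s2 := hNS 2
  rw [Fin.sum_univ_three] at s0 s1 s2 hdv
  have a0 := qM' 0
  have a1 := qM' 1
  have a2 := qM' 2
  have b0 := qG' 0
  have b1 := qG' 1
  have b2 := qG' 2
  have c0 := qN' 0
  have c1 := qN' 1
  have c2 := qN' 2
  simp [hx] at a0 a1 a2 b0 b1 b2 c0 c1 c2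
  refine cx_alg (x0 := x 0) (x1 := x 1) (t := t) (u0 := u x 0) (u1 := u x 1) (u2 := u x 2)
    h2 hw (by linarith) (by linarith) (by linarith) vN ?_ ?_ ?_ ?_ ?_ ?_ ?_ ?_ ?_ ?_ ?_ ?_ s0 s1 s2 hdv
  · linear_combination a0
  · linear_combination a1
  · linear_combination a2
  · linear_combination b0
  · linear_combination b1
  · linear_combination b2
  · linear_combination c0
  · linear_combination c1
  · linear_combination c2
  · linear_combination lM
  · linear_combination lG
  · linear_combination lN

lemma dx_rho (x : V3) : rho x = √(‖x‖ ^ 2 - x 2 ^ 2) := by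
  rw [rho, bx_normsq]; congr 1; ring

lemma dx_ident {u : V3 → V3} {Ω : Set V3} (haxi : AxisymOn u Ω) {x y : V3} (hx : x ∈ Ω) (hy : y ∈ Ω)
    (h1 : ‖x‖ = ‖y‖) (h2 : x 2 = y 2) (h3 : rho x ≠ 0) (h0 : x ≠ 0) :
    x 0 * u x 0 + x 1 * u x 1 = y 0 * u y 0 + y 1 * u y 1 ∧
    x 0 * u x 1 - x 1 * u x 0 = y 0 * u y 1 - y 1 * u y 0 ∧ u x 2 = u y 2 := by
  obtain ⟨a, b, c⟩ := haxi x hx y hy h1 h2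
  have h4 : rho x = rho y := by rw [dx_rho, dx_rho, h1, h2]
  have h5 : ‖x‖ ≠ 0 := norm_ne_zero_iff.2 h0
  have h6 : rho x ^ 2 + x 2 ^ 2 = ‖x‖ ^ 2 := by
    rw [rho, Real.sq_sqrt (by positivity), bx_normsq]
  unfold uRc at a
  unfold uTc at b
  unfold uPc at c
  rw [← h4] at b c
  rw [← h1, ← h2] at a b
  rw [div_left_inj' h5] at a
  rw [div_left_inj' h3] at c
  field_simp at b
  have e1 : (u x 2 - u y 2) * ‖x‖ ^ 2 = 0 := by
    rw [← h6]; linear_combination x 2 * a - b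
  have e2 : u x 2 = u y 2 := by
    rcases mul_eq_zero.1 e1 with h | h
    · linarith
    · exact absurd h (pow_ne_zero 2 h5)
  refine ⟨?_, ?_, e2⟩
  · rw [e2] at a; linarith
  · linarith

lemma dx_cone {δ : ℝ} (hδ : 0 < δ) {x : V3} (hx : x ≠ 0) (h1 : -1 < x 2 / ‖x‖)
    (h2 : x 2 / ‖x‖ < -1 + δ ^ 2 / 2) : x ∈ cone3 (NSCap δ) := by
  have h5 : ‖x‖ ≠ 0 := norm_ne_zero_iff.2 hx
  have h6 : ‖‖x‖⁻¹ • x‖ = 1 := by rw [norm_smul, norm_inv, norm_norm, inv_mul_cancel₀ h5]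
  have h7 : (‖x‖⁻¹ • x) 2 = x 2 / ‖x‖ := by simp [div_eq_inv_mul]
  refine ⟨hx, ⟨?_, ?_⟩, ?_⟩
  · simp only [sphere2, mem_sphere_zero_iff_norm]; exact h6
  · rw [mem_ball, dist_eq_norm]
    have := bx_normsq (‖x‖⁻¹ • x - S3)
    have h8 := bx_normsq (‖x‖⁻¹ • x)
    rw [← h7] at h2
    have : ‖‖x‖⁻¹ • x - S3‖ ^ 2 = 2 * (1 + (‖x‖⁻¹ • x) 2) := by
      rw [this]
      rw [h6] at h8
      have a0 : (‖x‖⁻¹ • x - S3) 0 = (‖x‖⁻¹ • x) 0 := by simp [S3]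
      have a1 : (‖x‖⁻¹ • x - S3) 1 = (‖x‖⁻¹ • x) 1 := by simp [S3]
      have a2 : (‖x‖⁻¹ • x - S3) 2 = (‖x‖⁻¹ • x) 2 + 1 := by simp [S3]
      rw [a0, a1, a2]; linarith
    refine lt_of_pow_lt_pow_left₀ 2 hδ.le ?_
    rw [this]; linarith
  · intro h
    rw [Set.mem_singleton_iff] at h
    rw [h] at h7
    simp [S3] at h7
    linarith

/-- the meridian curve -/
def cC (t : ℝ) : V3 := !₂[√(1 - t ^ 2), 0, t]

lemma dx_c0 (t : ℝ) : cC t 0 = √(1 - t ^ 2) := by simp [cC]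
lemma dx_c1 (t : ℝ) : cC t 1 = 0 := by simp [cC]
lemma dx_c2 (t : ℝ) : cC t 2 = t := by simp [cC]

lemma dx_cnorm {t : ℝ} (h : 0 ≤ 1 - t ^ 2) : ‖cC t‖ = 1 := by
  have := bx_normsq (cC t)
  rw [dx_c0, dx_c1, dx_c2, Real.sq_sqrt h] at this
  have h2 : ‖cC t‖ ^ 2 = 1 := by rw [this]; ring
  nlinarith [norm_nonneg (cC t)]

lemma dx_smul (l : ℝ) (x : V3) (i : Fin 3) : (l • x) i = l * x i := by simp

lemma dx_cone_c {δ : ℝ} (hδ : 0 < δ) {t : ℝ} (h1 : -1 < t) (h0 : t < 1)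
    (h2 : t < -1 + δ ^ 2 / 2) : cC t ∈ cone3 (NSCap δ) := by
  have h3 : ‖cC t‖ = 1 := dx_cnorm (by nlinarith)
  refine dx_cone hδ (by intro h; simp [h] at h3) ?_ ?_ <;> rw [h3, dx_c2, div_one] <;> assumption

lemma dx_ident2 {δ : ℝ} (hδ : 0 < δ) {u : V3 → V3}
    (hu_hom : ∀ x ∈ cone3 (NSCap δ), ∀ lam : ℝ, 0 < lam → u (lam • x) = lam⁻¹ • u x)
    (haxi : AxisymOn u (cone3 (NSCap δ))) {x : V3} (hx : x ≠ 0) (h1 : -1 < x 2 / ‖x‖)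
    (h0 : x 2 / ‖x‖ < 1) (h2 : x 2 / ‖x‖ < -1 + δ ^ 2 / 2) :
    x 0 * u x 0 + x 1 * u x 1 = √(1 - (x 2 / ‖x‖) ^ 2) * u (cC (x 2 / ‖x‖)) 0 ∧
    x 0 * u x 1 - x 1 * u x 0 = √(1 - (x 2 / ‖x‖) ^ 2) * u (cC (x 2 / ‖x‖)) 1 ∧
    x 2 * u x 2 = x 2 / ‖x‖ * u (cC (x 2 / ‖x‖)) 2 := by
  set t := x 2 / ‖x‖ with ht
  have h5 : 0 < ‖x‖ := norm_pos_iff.2 hx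
  have h3 : ‖cC t‖ = 1 := dx_cnorm (by nlinarith)
  have hxt : x 2 = ‖x‖ * t := by rw [ht]; field_simp
  have hyn : ‖‖x‖ • cC t‖ = ‖x‖ := by rw [norm_smul, norm_norm, h3, mul_one]
  have hy2 : (‖x‖ • cC t) 2 = x 2 := by rw [dx_smul, dx_c2, hxt]
  have hy0 : ‖x‖ • cC t ≠ 0 := by
    intro h; rw [h] at hyn; simp at hyn; exact h5.ne hyn
  have hy : ‖x‖ • cC t ∈ cone3 (NSCap δ) :=
    dx_cone hδ hy0 (by rw [hyn, hy2]; exact h1) (by rw [hyn, hy2]; exact h2)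
  have hr : rho x ≠ 0 := by
    rw [dx_rho, hxt]
    apply ne_of_gt
    apply Real.sqrt_pos.2
    have : 0 < ‖x‖ ^ 2 * (1 - t ^ 2) := mul_pos (by positivity) (by nlinarith)
    linarith
  obtain ⟨a, b, c⟩ := dx_ident haxi (dx_cone hδ hx h1 h2) hy hyn.symm hy2.symm hr hx
  rw [hu_hom _ (dx_cone_c hδ h1 h0 h2) _ h5] at a b c
  simp only [dx_smul, dx_c0, dx_c1] at a b c
  refine ⟨?_, ?_, ?_⟩
  · rw [a]; field_simp; ring
  · rw [b]; field_simp; ring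
  · rw [c, hxt]; field_simp

lemma dx_open {δ : ℝ} (hδ : 0 < δ) {x : V3} (hx : x ≠ 0) (h1 : -1 < x 2 / ‖x‖)
    (h2 : x 2 / ‖x‖ < -1 + δ ^ 2 / 2) {a b : ℝ} (ha : a < x 2 / ‖x‖) (hb : x 2 / ‖x‖ < b) :
    ∀ᶠ y in 𝓝 x, y ≠ 0 ∧ a < y 2 / ‖y‖ ∧ y 2 / ‖y‖ < b ∧ y ∈ cone3 (NSCap δ) := by
  obtain ⟨L, hL, -⟩ := bx_t hx
  have hc := hL.continuousAt
  filter_upwards [isOpen_ne.mem_nhds hx, hc.eventually (lt_mem_nhds ha), hc.eventually (gt_mem_nhds hb),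
    hc.eventually (lt_mem_nhds h1), hc.eventually (gt_mem_nhds h2)] with y q1 q2 q3 q4 q5
  exact ⟨q1, q2, q3, dx_cone hδ q1 q4 q5⟩

lemma dx_fd (F : V3 → ℝ) (x v : V3) :
    fderiv ℝ F x v = v 0 * pd 0 F x + v 1 * pd 1 F x + v 2 * pd 2 F x := by
  have : v = v 0 • e3 0 + v 1 • e3 1 + v 2 • e3 2 := by
    ext i; fin_cases i <;> simp [e3]
  conv_lhs => rw [this]
  simp [pd]

lemma dx_path {F : V3 → ℝ} {c : ℝ → V3} {s a0 a1 a2 : ℝ} (hF : DifferentiableAt ℝ F (c s))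
    (h0 : HasDerivAt (fun s => c s 0) a0 s) (h1 : HasDerivAt (fun s => c s 1) a1 s)
    (h2 : HasDerivAt (fun s => c s 2) a2 s) :
    HasDerivAt (fun s => F (c s)) (a0 * pd 0 F (c s) + a1 * pd 1 F (c s) + a2 * pd 2 F (c s)) s := by
  have hc : HasDerivAt c (!₂[a0, a1, a2] : V3) s := by
    have h : HasDerivAt (fun s => c s 0 • e3 0 + c s 1 • e3 1 + c s 2 • e3 2)
        (a0 • e3 0 + a1 • e3 1 + a2 • e3 2) s :=
      ((h0.smul_const _).add (h1.smul_const _)).add (h2.smul_const _)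
    have e1 : (fun s => c s 0 • e3 0 + c s 1 • e3 1 + c s 2 • e3 2) = c := by
      funext s; ext i; fin_cases i <;> simp [e3]
    have e2 : a0 • e3 0 + a1 • e3 1 + a2 • e3 2 = (!₂[a0, a1, a2] : V3) := by
      ext i; fin_cases i <;> simp [e3]
    rw [e1, e2] at h
    exact h
  have := hF.hasFDerivAt.comp_hasDerivAt s hc
  rw [dx_fd] at this
  refine this.congr_deriv ?_
  simp

lemma dx_sqrt {t : ℝ} (h : 0 < 1 - t ^ 2) :
    HasDerivAt (fun t => √(1 - t ^ 2)) (-(t / √(1 - t ^ 2))) t := by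
  have h1 : HasDerivAt (fun t : ℝ => 1 - t ^ 2) (-(2 * t)) t := by
    refine ((hasDerivAt_id t).pow 2).const_sub 1 |>.congr_deriv ?_
    simp
  refine (h1.sqrt h.ne').congr_deriv ?_
  have := (Real.sqrt_pos.2 h).ne'
  field_simp

lemma dx_sqrt_smooth {t : ℝ} (h : 0 < 1 - t ^ 2) : ContDiffAt ℝ 2 (fun t => √(1 - t ^ 2)) t :=
  ContDiffAt.sqrt (by fun_prop) h.ne'

lemma dx_c_smooth {t : ℝ} (h : 0 < 1 - t ^ 2) : ContDiffAt ℝ 2 cC t := by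
  rw [contDiffAt_euclidean]
  intro i
  fin_cases i
  · simpa [cC] using dx_sqrt_smooth h
  · simpa [cC] using contDiffAt_const
  · have : ContDiffAt ℝ 2 (fun x : ℝ => x) t := contDiffAt_id
    simpa [cC] using! this

/-- pressure on the meridian -/
lemma dx_press {p : V3 → ℝ} {t : ℝ} (h : 0 < 1 - t ^ 2) (hp : DifferentiableAt ℝ p (cC t))
    (hh : ∀ lam : ℝ, 0 < lam → p (lam • cC t) = (lam ^ 2)⁻¹ * p (cC t)) :
    ∃ P1, HasDerivAt (fun t => p (cC t)) P1 t ∧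
      cC t 0 * pd 0 p (cC t) + cC t 1 * pd 1 p (cC t) + t * pd 2 p (cC t) = -2 * p (cC t) ∧
      pd 2 p (cC t) = (1 - t ^ 2) * P1 - 2 * t * p (cC t) := by
  have h1 := dx_path (c := cC) hp (a0 := -(t / √(1 - t ^ 2))) (a1 := 0) (a2 := 1)
    (by simpa only [dx_c0] using dx_sqrt h) (by simpa only [dx_c1] using hasDerivAt_const t (0:ℝ))
    (by simpa only [dx_c2] using hasDerivAt_id' t)
  have hs := Real.sqrt_pos.2 h
  have hs2 := Real.sq_sqrt h.le
  have e1 : ∀ i, HasDerivAt (fun l : ℝ => (l • cC t) i) (cC t i) 1 := fun i => by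
    have : HasDerivAt (fun l : ℝ => l * cC t i) (1 * cC t i) 1 := (hasDerivAt_id' (1:ℝ)).mul_const _
    rw [one_mul] at this
    simpa only [dx_smul] using this
  have h2 := dx_path (F := p) (c := fun l : ℝ => l • cC t) (s := 1) (by simpa using hp) (e1 0) (e1 1) (e1 2)
  have h3 : HasDerivAt (fun l : ℝ => p (l • cC t)) (-2 * p (cC t)) 1 := by
    have : HasDerivAt (fun l : ℝ => (l ^ 2)⁻¹ * p (cC t)) (-2 * p (cC t)) 1 := by
      have := (((hasDerivAt_id' (1:ℝ)).pow 2).inv (by norm_num)).mul_const (p (cC t))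
      refine this.congr_deriv ?_
      norm_num
    refine this.congr_of_eventuallyEq ?_
    filter_upwards [lt_mem_nhds (zero_lt_one : (0:ℝ) < 1)] with l hl using hh l hl
  have h4 := h2.unique h3
  simp only [one_smul, dx_c0, dx_c1, dx_c2] at h4
  refine ⟨_, h1, by simp only [dx_c0, dx_c1]; exact h4, ?_⟩
  have h5 : √(1 - t ^ 2) * pd 0 p (cC t) = -2 * p (cC t) - t * pd 2 p (cC t) := by linarith
  have h6 : (1 - t ^ 2) * (t / √(1 - t ^ 2)) = t * √(1 - t ^ 2) := by
    rw [← hs2]; rw [Real.sqrt_sq hs.le]; field_simp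
  linear_combination t * h5 + pd 0 p (cC t) * h6

/-- circle argument -/
lemma dx_circle {p : V3 → ℝ} {r t κ : ℝ}
    (hp : ∀ x : V3, x 0 ^ 2 + x 1 ^ 2 = r ^ 2 → x 2 = t → DifferentiableAt ℝ p x ∧
      x 0 * pd 1 p x - x 1 * pd 0 p x = κ) : κ = 0 := by
  have hd : ∀ φ : ℝ, HasDerivAt (fun φ : ℝ => p (!₂[r * cos φ, r * sin φ, t] : V3)) κ φ := fun φ => by
    obtain ⟨a, b⟩ := hp (!₂[r * cos φ, r * sin φ, t] : V3)
      (by simp; linear_combination r ^ 2 * Real.sin_sq_add_cos_sq φ) (by simp)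
    have := dx_path (F := p) (c := fun φ : ℝ => (!₂[r * cos φ, r * sin φ, t] : V3)) (s := φ)
      (a0 := r * (- sin φ)) (a1 := r * cos φ) (a2 := 0) a
      (by simpa using (Real.hasDerivAt_cos φ).const_mul r)
      (by simpa using (Real.hasDerivAt_sin φ).const_mul r)
      (by simpa using hasDerivAt_const φ t)
    refine this.congr_deriv ?_
    rw [← b]
    simp
    ring
  obtain ⟨c, -, hc⟩ := exists_hasDerivAt_eq_zero (f := fun φ : ℝ => p (!₂[r * cos φ, r * sin φ, t] : V3))
    (f' := fun _ => κ) (a := 0) (b := 2 * π) (by positivity)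
    (fun φ _ => (hd φ).continuousAt.continuousWithinAt) (by simp) (fun φ _ => hd φ)
  exact hc

lemma dx_smooth {F : ℝ → ℝ} {t : ℝ} (h : ContDiffAt ℝ 2 F t) :
    HasDerivAt F (deriv F t) t ∧ HasDerivAt (deriv F) (deriv (deriv F) t) t := by
  refine ⟨(h.differentiableAt (by norm_num)).hasDerivAt, ?_⟩
  have h1 : ContDiffAt ℝ 1 (deriv F) t := h.derivWithin (by norm_num)
  exact (h1.differentiableAt (by norm_num)).hasDerivAt

theorem dx_ode {δ η : ℝ} (hδ : 0 < δ) (hη1 : η ≤ 1) (hη2 : η ≤ δ ^ 2 / 2) {u : V3 → V3} {p : V3 → ℝ}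
    (hu_hom : ∀ x ∈ cone3 (NSCap δ), ∀ lam : ℝ, 0 < lam → u (lam • x) = lam⁻¹ • u x)
    (hp_hom : ∀ x ∈ cone3 (NSCap δ), ∀ lam : ℝ, 0 < lam → p (lam • x) = (lam ^ 2)⁻¹ * p x)
    (hu_reg : ContDiffOn ℝ 2 u (cone3 (NSCap δ)))
    (hp_reg : ContDiffOn ℝ 1 p (cone3 (NSCap δ)))
    (haxi : AxisymOn u (cone3 (NSCap δ)))
    (hNS : ∀ x ∈ cone3 (NSCap δ), NSEq u p x)
    {m g γ : ℝ → ℝ} (em : m = fun t => √(1 - t ^ 2) * u (cC t) 0) (eγ : γ = fun t => √(1 - t ^ 2) * u (cC t) 1)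
    (eg : g = fun t => u (cC t) 2) :
    ∀ t ∈ Set.Ioo (-1) (-1 + η),
      (HasDerivAt m (deriv m t) t ∧ HasDerivAt (deriv m) (deriv (deriv m) t) t) ∧
      (HasDerivAt g (deriv g t) t ∧ HasDerivAt (deriv g) (deriv (deriv g) t) t) ∧
      (HasDerivAt γ (deriv γ t) t ∧ HasDerivAt (deriv γ) (deriv (deriv γ) t) t) ∧
      ((1 - t ^ 2) * deriv (deriv γ) t + (t * (m t + t * g t) - g t) * deriv γ t = 0) ∧
      ((1 - t ^ 2) * deriv g t - t * g t = t * deriv m t) ∧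
      ∃ P1, HasDerivAt (fun t => p (cC t)) P1 t ∧
      ((1 - t ^ 2) * ((1 - t ^ 2) * (deriv (deriv m) t + (2 * deriv g t + t * deriv (deriv g) t))
        - 2 * t * (deriv m t + (g t + t * deriv g t))
        + (t * (m t + t * g t) - g t) * (deriv m t + (g t + t * deriv g t)) + 2 * p (cC t))
        + (1 - t ^ 2) * (m t + t * g t) ^ 2 + (t * (m t + t * g t) - g t) ^ 2 + γ t ^ 2 = 0) ∧
      (-((1 - t ^ 2) * deriv (deriv g) t - 2 * t * deriv g t) - m t * (g t + t * deriv g t)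
      + g t * (deriv g t * (1 - t ^ 2) - t * g t) + ((1 - t ^ 2) * P1 - 2 * t * p (cC t)) = 0) := by
  have hopen : ∀ x : V3, x ≠ 0 → -1 < x 2 / ‖x‖ → x 2 / ‖x‖ < -1 + η →
      cone3 (NSCap δ) ∈ 𝓝 x := fun x hx h1 h2 => by
    filter_upwards [dx_open hδ hx h1 (by linarith) h1 h2] with y hy using hy.2.2.2
  have hur : ∀ x : V3, x ≠ 0 → -1 < x 2 / ‖x‖ → x 2 / ‖x‖ < -1 + η →
      ∀ i, ContDiffAt ℝ 2 (fun z => u z i) x := fun x hx h1 h2 i => by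
    have := hu_reg.contDiffAt (hopen x hx h1 h2)
    exact (contDiffAt_euclidean.1 this) i
  have hpr : ∀ x : V3, x ≠ 0 → -1 < x 2 / ‖x‖ → x 2 / ‖x‖ < -1 + η →
      DifferentiableAt ℝ p x := fun x hx h1 h2 =>
    (hp_reg.contDiffAt (hopen x hx h1 h2)).differentiableAt (by norm_num)
  have hw : ∀ t ∈ Set.Ioo (-1) (-1 + η), 0 < 1 - t ^ 2 := fun t ht => by
    have := ht.1; have := ht.2; nlinarith
  have hcn : ∀ t ∈ Set.Ioo (-1) (-1 + η), ‖cC t‖ = 1 := fun t ht => dx_cnorm (hw t ht).le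
  have hc : ∀ t ∈ Set.Ioo (-1) (-1 + η), cC t ≠ 0 ∧ -1 < cC t 2 / ‖cC t‖ ∧ cC t 2 / ‖cC t‖ < -1 + η :=
    fun t ht => by
      rw [hcn t ht, dx_c2, div_one]
      refine ⟨fun h => ?_, ht⟩
      have := hcn t ht
      simp [h] at this
  have huc : ∀ t ∈ Set.Ioo (-1) (-1 + η), ∀ i, ContDiffAt ℝ 2 (fun t => u (cC t) i) t := fun t ht i =>
    (hur _ (hc t ht).1 (hc t ht).2.1 (hc t ht).2.2 i).comp t (dx_c_smooth (hw t ht))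
  have cm : ∀ t ∈ Set.Ioo (-1) (-1 + η), ContDiffAt ℝ 2 m t := fun t ht => by
    rw [em]; exact (dx_sqrt_smooth (hw t ht)).mul (huc t ht 0)
  have cγ : ∀ t ∈ Set.Ioo (-1) (-1 + η), ContDiffAt ℝ 2 γ t := fun t ht => by
    rw [eγ]; exact (dx_sqrt_smooth (hw t ht)).mul (huc t ht 1)
  have cg : ∀ t ∈ Set.Ioo (-1) (-1 + η), ContDiffAt ℝ 2 g t := fun t ht => by
    rw [eg]; exact huc t ht 2
  have hpt : ∀ x : V3, ‖x‖ = 1 → x 2 ∈ Set.Ioo (-1) (-1 + η) → _ := fun x hx ht => by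
    have hx0 : x ≠ 0 := by intro h; simp [h] at hx
    have hxt : x 2 / ‖x‖ = x 2 := by rw [hx, div_one]
    have ht1 : -1 < x 2 / ‖x‖ := by rw [hxt]; exact ht.1
    have ht2 : x 2 / ‖x‖ < -1 + η := by rw [hxt]; exact ht.2
    have hev := dx_open hδ hx0 ht1 (by linarith) ht1 ht2
    have hid : ∀ᶠ y in 𝓝 x, _ := hev.mono fun y hy =>
      dx_ident2 hδ hu_hom haxi hy.1 hy.2.1 (by linarith [hy.2.2.1]) (by linarith [hy.2.2.1])
    have hI : ∀ᶠ t in 𝓝 (x 2), t ∈ Set.Ioo (-1) (-1 + η) := isOpen_Ioo.mem_nhds ht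
    exact cx_point (m := m) (g := g) (γ := γ) (m1 := deriv m) (g1 := deriv g) (γ1 := deriv γ)
      (m2 := deriv (deriv m) (x 2)) (g2 := deriv (deriv g) (x 2)) (γ2 := deriv (deriv γ) (x 2))
      hx (hur x hx0 ht1 ht2) (hNS x (mem_of_mem_nhds (hopen x hx0 ht1 ht2)))
      (by have := ht.2; intro h; rw [h] at this; linarith) (hw _ ht).ne'
      (by filter_upwards [hid] with y hy; rw [em]; refine Eq.trans ?_ hy.1; ring)
      (by filter_upwards [hid] with y hy; rw [eγ]; refine Eq.trans ?_ hy.2.1; ring)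
      (by filter_upwards [hid] with y hy; rw [eg, ← hy.2.2])
      (hI.mono fun t ht => (dx_smooth (cm t ht)).1) (dx_smooth (cm _ ht)).2
      (hI.mono fun t ht => (dx_smooth (cg t ht)).1) (dx_smooth (cg _ ht)).2
      (hI.mono fun t ht => (dx_smooth (cγ t ht)).1) (dx_smooth (cγ _ ht)).2
  intro t ht
  refine ⟨dx_smooth (cm t ht), dx_smooth (cg t ht), dx_smooth (cγ t ht), ?_, ?_⟩
  · apply dx_circle (p := p) (r := √(1 - t ^ 2)) (t := t)
    intro x hx hx2
    rw [Real.sq_sqrt (hw t ht).le] at hx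
    have hn : ‖x‖ = 1 := by
      have := bx_normsq x
      rw [hx2] at this
      have : ‖x‖ ^ 2 = 1 := by linarith
      nlinarith [norm_nonneg x]
    refine ⟨hpr x (by intro h; simp [h] at hn) ?_ ?_, ?_⟩
    · rw [hn, hx2, div_one]; exact ht.1
    · rw [hn, hx2, div_one]; exact ht.2
    · have := (hpt x hn (by rw [hx2]; exact ht)).1
      rw [hx2] at this
      exact this
  · obtain ⟨P1, hP, h1, h2⟩ := dx_press (hw t ht) (hpr _ (hc t ht).1 (hc t ht).2.1 (hc t ht).2.2)
      (hp_hom _ (mem_of_mem_nhds (hopen _ (hc t ht).1 (hc t ht).2.1 (hc t ht).2.2)))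
    obtain ⟨-, o2, o3, o4⟩ := hpt (cC t) (hcn t ht) (by rw [dx_c2]; exact ht)
    simp only [dx_c2] at o2 o3 o4
    rw [h1] at o3
    rw [h2] at o4
    refine ⟨o2, P1, hP, ?_, o4⟩
    linear_combination o3

theorem ex_1d {m g γ P : ℝ → ℝ} {η τ : ℝ} (hη : 0 < η) (hη1 : η ≤ 1)
    (H : ∀ t ∈ Set.Ioo (-1) (-1 + η),
      (HasDerivAt m (deriv m t) t ∧ HasDerivAt (deriv m) (deriv (deriv m) t) t) ∧
      (HasDerivAt g (deriv g t) t ∧ HasDerivAt (deriv g) (deriv (deriv g) t) t) ∧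
      (HasDerivAt γ (deriv γ t) t ∧ HasDerivAt (deriv γ) (deriv (deriv γ) t) t) ∧
      ((1 - t ^ 2) * deriv (deriv γ) t + (t * (m t + t * g t) - g t) * deriv γ t = 0) ∧
      ((1 - t ^ 2) * deriv g t - t * g t = t * deriv m t) ∧
      ∃ P1, HasDerivAt P P1 t ∧
      ((1 - t ^ 2) * ((1 - t ^ 2) * (deriv (deriv m) t + (2 * deriv g t + t * deriv (deriv g) t))
        - 2 * t * (deriv m t + (g t + t * deriv g t))
        + (t * (m t + t * g t) - g t) * (deriv m t + (g t + t * deriv g t)) + 2 * P t)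
        + (1 - t ^ 2) * (m t + t * g t) ^ 2 + (t * (m t + t * g t) - g t) ^ 2 + γ t ^ 2 = 0) ∧
      (-((1 - t ^ 2) * deriv (deriv g) t - 2 * t * deriv g t) - m t * (g t + t * deriv g t)
      + g t * (deriv g t * (1 - t ^ 2) - t * g t) + ((1 - t ^ 2) * P1 - 2 * t * P t) = 0))
    (hlim : Tendsto (fun s => (s - 1) * (m (s - 1) + (s - 1) * g (s - 1)) - g (s - 1)) (𝓝[>] 0) (𝓝 τ))
    (hτ : 2 < τ) (hτ3 : τ < 3) :
    ((∃ c, ∀ s ∈ Set.Ioo 0 η, γ (s - 1) = c) ∨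
      ∃ L, L ≠ 0 ∧ Tendsto (fun s => s ^ (τ / 2 - 1) * γ (s - 1)) (𝓝[>] 0) (𝓝 L)) ∧
    (∃ L, Tendsto (fun s => s ^ (τ - 2) * (m (s - 1) + (s - 1) * g (s - 1))) (𝓝[>] 0) (𝓝 L)) := by
  have hI : ∀ s ∈ Set.Ioo 0 η, s - 1 ∈ Set.Ioo (-1) (-1 + η) := fun s hs =>
    ⟨by linarith [hs.1], by linarith [hs.2]⟩
  have hw : ∀ t ∈ Set.Ioo (-1) (-1 + η), 0 < 1 - t ^ 2 := fun t ht => by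
    have := ht.1; have := ht.2; nlinarith
  have ws : ∀ s : ℝ, s * (2 - s) = 1 - (s - 1) ^ 2 := fun s => by ring
  -- basic functions
  obtain ⟨f, hf⟩ : ∃ f : ℝ → ℝ, f = fun t => m t + t * g t := ⟨_, rfl⟩
  obtain ⟨f1, hf1⟩ : ∃ f1 : ℝ → ℝ, f1 = fun t => deriv m t + (g t + t * deriv g t) := ⟨_, rfl⟩
  obtain ⟨U, hU⟩ : ∃ U : ℝ → ℝ, U = fun t => t * (m t + t * g t) - g t := ⟨_, rfl⟩
  obtain ⟨f2, hf2⟩ : ∃ f2 : ℝ → ℝ, f2 = fun t => deriv (deriv m) t + (2 * deriv g t + t * deriv (deriv g) t) :=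
    ⟨_, rfl⟩
  have hg1 : ∀ t ∈ Set.Ioo (-1) (-1 + η), deriv g t = t * f1 t := fun t ht => by
    obtain ⟨-, -, -, -, o2, -⟩ := H t ht
    rw [hf1]; simp only; linear_combination o2
  have df : ∀ t ∈ Set.Ioo (-1) (-1 + η), HasDerivAt f (f1 t) t := fun t ht => by
    obtain ⟨am, ag, aγ, -⟩ := H t ht
    rw [hf, hf1]
    refine (am.1.add ((hasDerivAt_id' t).mul ag.1)).congr_deriv ?_
    simp
  have df1 : ∀ t ∈ Set.Ioo (-1) (-1 + η), HasDerivAt f1 (f2 t) t := fun t ht => by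
    obtain ⟨am, ag, aγ, -⟩ := H t ht
    rw [hf1, hf2]
    refine (am.2.add (ag.1.add ((hasDerivAt_id' t).mul ag.2))).congr_deriv ?_
    simp; ring
  have dU : ∀ t ∈ Set.Ioo (-1) (-1 + η), HasDerivAt U (f t) t := fun t ht => by
    obtain ⟨am, ag, aγ, -⟩ := H t ht
    have := ((hasDerivAt_id' t).mul (df t ht)).sub ag.1
    rw [hf] at this
    rw [hU]
    refine this.congr_deriv ?_
    rw [hg1 t ht, hf]; ring
  have hg2 : ∀ t ∈ Set.Ioo (-1) (-1 + η), deriv (deriv g) t = f1 t + t * f2 t := fun t ht => by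
    obtain ⟨am, ag, aγ, -⟩ := H t ht
    have h1 : HasDerivAt (fun t => t * f1 t) (1 * f1 t + t * f2 t) t := (hasDerivAt_id' t).mul (df1 t ht)
    have h2 := h1.congr_of_eventuallyEq (f₁ := deriv g) (by
      filter_upwards [isOpen_Ioo.mem_nhds ht] with y hy using hg1 y hy)
    have := ag.2.unique h2
    rw [this]; ring
  have dw : ∀ t : ℝ, HasDerivAt (fun t : ℝ => 1 - t ^ 2) (-(2 * t)) t := fun t => by
    refine ((hasDerivAt_id t).pow 2).const_sub 1 |>.congr_deriv ?_
    simp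
  have hO3 : ∀ t ∈ Set.Ioo (-1) (-1 + η), (1 - t ^ 2) * ((1 - t ^ 2) * f2 t - 2 * t * f1 t + U t * f1 t + 2 * P t)
      + (1 - t ^ 2) * f t ^ 2 + U t ^ 2 + γ t ^ 2 = 0 := fun t ht => by
    obtain ⟨-, -, -, -, -, P1, -, o3, -⟩ := H t ht
    rw [hf, hf1, hf2, hU]; exact o3
  have hge : ∀ t, g t = t * f t - U t := fun t => by rw [hf, hU]; ring
  have hme : ∀ t, m t = f t - t * g t := fun t => by rw [hf]; ring
  have dP : ∀ t ∈ Set.Ioo (-1) (-1 + η), HasDerivAt P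
      (f1 t - U t * f t / (1 - t ^ 2) - t * (U t ^ 2 + γ t ^ 2) / (1 - t ^ 2) ^ 2) t := fun t ht => by
    obtain ⟨-, -, -, -, -, P1, hP, -, o4⟩ := H t ht
    have o3 := hO3 t ht
    refine hP.congr_deriv ?_
    have hwt := (hw t ht).ne'
    rw [hg2 t ht, hg1 t ht, hme t, hge t] at o4
    field_simp
    linear_combination (1 - t ^ 2) * o4 + t * o3
  have dE : ∀ t ∈ Set.Ioo (-1) (-1 + η), HasDerivAt (fun t => (1 - t ^ 2) * f1 t + U t * f t + 2 * U t)
      (-(γ t ^ 2 / (1 - t ^ 2) + 2 * (P t - f t + U t ^ 2 / (2 * (1 - t ^ 2))))) t := fun t ht => by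
    have := (((dw t).mul (df1 t ht)).add ((dU t ht).mul (df t ht))).add ((dU t ht).const_mul 2)
    refine this.congr_deriv ?_
    have hwt := (hw t ht).ne'
    have o3 := hO3 t ht
    field_simp
    linear_combination o3
  have dG : ∀ t ∈ Set.Ioo (-1) (-1 + η), HasDerivAt (fun t => P t - f t + U t ^ 2 / (2 * (1 - t ^ 2)))
      (-t * γ t ^ 2 / (1 - t ^ 2) ^ 2) t := fun t ht => by
    have hwt := (hw t ht).ne'
    have := ((dP t ht).sub (df t ht)).add (((dU t ht).pow 2).div ((dw t).const_mul 2) (by simpa using hwt))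
    refine this.congr_deriv ?_
    simp only [Pi.pow_apply]
    field_simp
    ring
  have key := ax_main (U := fun s => U (s - 1)) (f := fun s => f (s - 1)) (f1 := fun s => f1 (s - 1))
    (γ := fun s => γ (s - 1)) (γ1 := fun s => deriv γ (s - 1))
    (G := fun s => P (s - 1) - f (s - 1) + U (s - 1) ^ 2 / (2 * (1 - (s - 1) ^ 2))) (τ := τ) hη hη1
    (fun s hs => (dU _ (hI s hs)).comp_sub_const s 1)
    (fun s hs => (df _ (hI s hs)).comp_sub_const s 1)
    (fun s hs => by
      simp only [ws]
      exact (dE _ (hI s hs)).comp_sub_const s 1)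
    (fun s hs => by
      simp only [ws]
      refine ((dG _ (hI s hs)).comp_sub_const s 1).congr_deriv ?_
      ring)
    (fun s hs => (H _ (hI s hs)).2.2.1.1.comp_sub_const s 1)
    (fun s hs => by
      simp only [ws]
      refine ((H _ (hI s hs)).2.2.1.2.comp_sub_const s 1).congr_deriv ?_
      have hwt := (hw _ (hI s hs)).ne'
      have := (H _ (hI s hs)).2.2.2.1
      rw [hU]
      field_simp
      linear_combination this)
    (by rw [hU]; exact hlim) hτ hτ3
  rw [hf] at key
  exact key

/-- expansion when `2 < τ < 3`. -/
theorem expansion_tau_between_two_three (δ : ℝ) (hδ : 0 < δ) (u : V3 → V3) (p : V3 → ℝ)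
    (hu_hom : ∀ x ∈ cone3 (NSCap δ), ∀ lam : ℝ, 0 < lam → u (lam • x) = lam⁻¹ • u x)
    (hp_hom : ∀ x ∈ cone3 (NSCap δ), ∀ lam : ℝ, 0 < lam → p (lam • x) = (lam ^ 2)⁻¹ * p x)
    (hu_reg : ContDiffOn ℝ 2 u (cone3 (NSCap δ)))
    (hp_reg : ContDiffOn ℝ 1 p (cone3 (NSCap δ)))
    (haxi : AxisymOn u (cone3 (NSCap δ)))
    (hNS : ∀ x ∈ cone3 (NSCap δ), NSEq u p x)
    (τ : ℝ) (hτ : Tendsto (fun x => rho x * uTc u x) (𝓝[sphere2 \ {S3}] S3) (𝓝 τ))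
    (hτl : 2 < τ) (hτu : τ < 3) :
    ((∃ c : ℝ, ∀ᶠ x in 𝓝[sphere2 \ {S3}] S3, rho x * uPc u x = c) ∨
      (∃ L : ℝ, L ≠ 0 ∧
        Tendsto (fun x => rho x ^ (τ - 1) * uPc u x) (𝓝[sphere2 \ {S3}] S3) (𝓝 L))) ∧
    (∃ L2 : ℝ, Tendsto (fun x => rho x ^ (2 * τ - 4) * uRc u x)
      (𝓝[sphere2 \ {S3}] S3) (𝓝 L2)) := by
  obtain ⟨η, hη, hη1, hη2⟩ : ∃ η : ℝ, 0 < η ∧ η ≤ 1 ∧ η ≤ δ ^ 2 / 2 :=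
    ⟨min 1 (δ ^ 2 / 2), lt_min one_pos (by positivity), min_le_left _ _, min_le_right _ _⟩
  obtain ⟨m, em⟩ : ∃ m : ℝ → ℝ, m = fun t => √(1 - t ^ 2) * u (cC t) 0 := ⟨_, rfl⟩
  obtain ⟨γ, eγ⟩ : ∃ γ : ℝ → ℝ, γ = fun t => √(1 - t ^ 2) * u (cC t) 1 := ⟨_, rfl⟩
  obtain ⟨g, eg⟩ : ∃ g : ℝ → ℝ, g = fun t => u (cC t) 2 := ⟨_, rfl⟩
  have H := dx_ode hδ hη1 hη2 hu_hom hp_hom hu_reg hp_reg haxi hNS em eγ eg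
  have hid : ∀ x ∈ sphere2, 1 + x 2 ∈ Set.Ioo 0 η → rho x = √((1 + x 2) * (2 - (1 + x 2))) ∧
      rho x * uTc u x = x 2 * (m (x 2) + x 2 * g (x 2)) - g (x 2) ∧
      rho x * uPc u x = γ (x 2) ∧ uRc u x = m (x 2) + x 2 * g (x 2) := fun x hx ht => by
    have hn : ‖x‖ = 1 := by simpa [sphere2] using hx
    have hx0 : x ≠ 0 := by intro h; simp [h] at hn
    have hxt : x 2 / ‖x‖ = x 2 := by rw [hn, div_one]
    have ht1 := ht.1
    have ht2 := ht.2
    obtain ⟨a, b, c⟩ := dx_ident2 hδ hu_hom haxi hx0 (by rw [hxt]; linarith) (by rw [hxt]; linarith)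
      (by rw [hxt]; linarith)
    rw [hxt] at a b c
    have hrho : rho x = √((1 + x 2) * (2 - (1 + x 2))) := by
      rw [dx_rho, hn]; congr 1; ring
    have hpos : 0 < (1 + x 2) * (2 - (1 + x 2)) := mul_pos ht1 (by linarith)
    have hr : 0 < rho x := by rw [hrho]; exact Real.sqrt_pos.2 hpos
    have hr2 : rho x ^ 2 = 1 - x 2 ^ 2 := by rw [hrho, Real.sq_sqrt hpos.le]; ring
    have hx2 : x 2 ≠ 0 := by intro h; rw [h] at ht2; linarith
    have c1 : u x 2 = g (x 2) := by rw [eg]; exact mul_left_cancel₀ hx2 c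
    have a1 : x 0 * u x 0 + x 1 * u x 1 = m (x 2) := by rw [em]; exact a
    have b1 : x 0 * u x 1 - x 1 * u x 0 = γ (x 2) := by rw [eγ]; exact b
    refine ⟨hrho, ?_, ?_, ?_⟩
    · rw [uTc, hn, ← a1, ← c1]
      have : rho x * ((u x 0 * x 0 * x 2 + u x 1 * x 1 * x 2) / (1 * rho x) - u x 2 * rho x / 1)
          = (u x 0 * x 0 * x 2 + u x 1 * x 1 * x 2) - u x 2 * rho x ^ 2 := by
        field_simp
      rw [this, hr2]; ring
    · rw [uPc, ← b1, mul_div_cancel₀ _ hr.ne']; ring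
    · rw [uRc, hn, ← a1, ← c1]; ring
  have hS2 : S3 2 = -1 := by simp [S3]
  have hs : Tendsto (fun x : V3 => 1 + x 2) (𝓝[sphere2 \ {S3}] S3) (𝓝[>] 0) := by
    apply tendsto_nhdsWithin_iff.2
    constructor
    · have : ContinuousAt (fun x : V3 => 1 + x 2) S3 := (bx_coord 2 S3).continuousAt.const_add 1
      have h2 := this.tendsto.mono_left (nhdsWithin_le_nhds (s := sphere2 \ {S3}))
      simpa [hS2] using h2
    · filter_upwards [self_mem_nhdsWithin] with x hx
      have hn : ‖x‖ = 1 := by simpa [sphere2] using hx.1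
      have h3 := bx_normsq x
      rw [hn] at h3
      have h4 : x 2 ≠ -1 := by
        intro h
        apply hx.2
        rw [h] at h3
        have h0 : x 0 = 0 := by nlinarith [sq_nonneg (x 0), sq_nonneg (x 1)]
        have h1 : x 1 = 0 := by nlinarith [sq_nonneg (x 0), sq_nonneg (x 1)]
        rw [Set.mem_singleton_iff]
        ext i
        fin_cases i <;> simp [S3, h0, h1, h]
      have h5 : -1 ≤ x 2 := by nlinarith [sq_nonneg (x 0), sq_nonneg (x 1)]
      have := lt_of_le_of_ne h5 h4.symm
      simp only [Set.mem_Ioi]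
      linarith
  have hev : ∀ᶠ x in 𝓝[sphere2 \ {S3}] S3, x ∈ sphere2 ∧ 1 + x 2 ∈ Set.Ioo 0 η := by
    filter_upwards [self_mem_nhdsWithin, hs.eventually (Ioo_mem_nhdsGT hη)] with x h1 h2
    exact ⟨h1.1, h2⟩
  have hcS : Tendsto (fun s : ℝ => cC (s - 1)) (𝓝[>] 0) (𝓝[sphere2 \ {S3}] S3) := by
    apply tendsto_nhdsWithin_iff.2
    constructor
    · have hc : Continuous cC := by
        unfold cC
        fun_prop
      have h0 : Continuous (fun s : ℝ => cC (s - 1)) := hc.comp (by fun_prop)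
      have h1 := (h0.tendsto 0).mono_left (nhdsWithin_le_nhds (s := Set.Ioi 0))
      have h2 : cC (0 - 1) = S3 := by
        ext i
        fin_cases i <;> simp [S3, cC]
      rwa [h2] at h1
    · filter_upwards [Ioo_mem_nhdsGT (zero_lt_one : (0:ℝ) < 1)] with s hs
      have h1 := hs.1
      have h2 := hs.2
      refine ⟨?_, ?_⟩
      · simp only [sphere2, mem_sphere_zero_iff_norm]
        exact dx_cnorm (by nlinarith)
      · intro h
        rw [Set.mem_singleton_iff] at h
        have := dx_c2 (s - 1)
        rw [h, hS2] at this
        linarith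
  have hlim : Tendsto (fun s => (s - 1) * (m (s - 1) + (s - 1) * g (s - 1)) - g (s - 1)) (𝓝[>] 0) (𝓝 τ) := by
    refine (hτ.comp hcS).congr' ?_
    filter_upwards [hcS.eventually hev] with s hs
    have := (hid _ hs.1 hs.2).2.1
    rw [dx_c2] at this
    exact this
  obtain ⟨h1, L2, hL2⟩ := ex_1d hη hη1 H hlim hτl hτu
  have key : ∀ e : ℝ, ∀ x ∈ sphere2, 1 + x 2 ∈ Set.Ioo 0 η →
      rho x ^ (2 * e) = (2 - (1 + x 2)) ^ e * (1 + x 2) ^ e := fun e x hx ht => by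
    have q1 : 0 ≤ 1 + x 2 := ht.1.le
    have q2 : 0 ≤ 2 - (1 + x 2) := by have := ht.2; linarith
    rw [(hid x hx ht).1, Real.sqrt_eq_rpow, ← Real.rpow_mul (mul_nonneg q1 q2), mul_comm (1 + x 2),
      ← Real.mul_rpow q2 q1]
    congr 1; ring
  have h2e : ∀ e : ℝ, Tendsto (fun s : ℝ => (2 - s) ^ e) (𝓝[>] 0) (𝓝 (2 ^ e)) := fun e => by
    have : ContinuousAt (fun s : ℝ => (2 - s) ^ e) 0 :=
      ContinuousAt.rpow_const (by fun_prop) (Or.inl (by norm_num))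
    have h := this.tendsto.mono_left (nhdsWithin_le_nhds (s := Set.Ioi 0))
    simpa using h
  refine ⟨?_, ?_⟩
  · rcases h1 with ⟨c, hc⟩ | ⟨L, hL0, hL⟩
    · left
      refine ⟨c, ?_⟩
      filter_upwards [hev] with x hx
      rw [(hid x hx.1 hx.2).2.2.1, ← hc _ hx.2]
      congr 1; ring
    · right
      refine ⟨2 ^ (τ / 2 - 1) * L, mul_ne_zero (Real.rpow_pos_of_pos two_pos _).ne' hL0, ?_⟩
      refine (((h2e (τ / 2 - 1)).mul hL).comp hs).congr' ?_
      filter_upwards [hev] with x hx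
      have hr : rho x ≠ 0 := by
        rw [(hid x hx.1 hx.2).1]
        exact (Real.sqrt_pos.2 (mul_pos hx.2.1 (by have := hx.2.2; linarith))).ne'
      have e1 : rho x ^ (τ - 1) = rho x ^ (2 * (τ / 2 - 1)) * rho x := by
        rw [← Real.rpow_add_one hr]; congr 1; ring
      have e2 : 1 + x 2 - 1 = x 2 := by ring
      simp only [Function.comp, e2]
      rw [e1, mul_assoc, (hid x hx.1 hx.2).2.2.1, key _ x hx.1 hx.2]; ring
  · refine ⟨2 ^ (τ - 2) * L2, ?_⟩
    refine (((h2e (τ - 2)).mul hL2).comp hs).congr' ?_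
    filter_upwards [hev] with x hx
    have e1 : 2 * τ - 4 = 2 * (τ - 2) := by ring
    have e2 : 1 + x 2 - 1 = x 2 := by ring
    simp only [Function.comp, e2]
    rw [e1, (hid x hx.1 hx.2).2.2.2, key _ x hx.1 hx.2]; ring
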